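/- arXiv:2209.08304 — 5 statements merged into one kernel-verified Lean document; each statement's English description precedes it below -/
import Mathlib

section
/- Let U ⊆ ℝ^m be open and let W be a smooth strictly positive function on U such that for every g ∈ C_c^∞(U) one has ∫_U Δ(W²)·g² dx ≤ 2·∫_U W²·|∇g|² dx. Then for every f ∈ C_c^∞(U) the Hardy-type inequality ∫_U (|∇W|²/W²)·f² dx ≤ ∫_U |∇f|² dx holds. -/
open Real MeasureTheory

/-- The Euclidean Laplacian of `f : ℝ^m → ℝ`, as the sum of the second partial
derivatives along the coordinate directions. -/
noncomputable def lap {m : ℕ} (f : EuclideanSpace ℝ (Fin m) → ℝ)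
    (x : EuclideanSpace ℝ (Fin m)) : ℝ :=
  ∑ i : Fin m,
    fderiv ℝ (fun y => fderiv ℝ f y (EuclideanSpace.single i 1)) x (EuclideanSpace.single i 1)

lemma hardy_norm_gradient_sq {m : ℕ} (h : EuclideanSpace ℝ (Fin m) → ℝ)
    (x : EuclideanSpace ℝ (Fin m)) :
    ‖gradient h x‖ ^ 2 = ∑ i, (fderiv ℝ h x (EuclideanSpace.single i 1)) ^ 2 := by
  rw [EuclideanSpace.real_norm_sq_eq]
  refine Finset.sum_congr rfl fun i _ => ?_
  congr 1
  have h1 : inner ℝ (gradient h x) (EuclideanSpace.single i (1:ℝ))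
      = fderiv ℝ h x (EuclideanSpace.single i 1) := by
    simp only [gradient, InnerProductSpace.toDual_symm_apply]
  rw [← h1, EuclideanSpace.inner_single_right]
  simp only [one_mul, conj_trivial]

lemma hardy_integrable {m : ℕ} {U K : Set (EuclideanSpace ℝ (Fin m))}
    (hK : IsCompact K) (hKU : K ⊆ U) {h : EuclideanSpace ℝ (Fin m) → ℝ}
    (hc : ContinuousOn h U) (h0 : ∀ x, x ∉ K → h x = 0) : Integrable h := by
  have h1 : IntegrableOn h K := (hc.mono hKU).integrableOn_compact hK
  refine (integrableOn_iff_integrable_of_support_subset ?_).1 h1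
  intro x hx
  by_contra hxK
  exact hx (h0 x hxK)

theorem hardy_from_weighted_contractivity {m : ℕ}
    (U : Set (EuclideanSpace ℝ (Fin m))) (hU : IsOpen U)
    (W : EuclideanSpace ℝ (Fin m) → ℝ)
    (hW : ContDiffOn ℝ (⊤ : ℕ∞) W U) (hWpos : ∀ x ∈ U, 0 < W x)
    (hmain : ∀ g : EuclideanSpace ℝ (Fin m) → ℝ,
      ContDiff ℝ (⊤ : ℕ∞) g → HasCompactSupport g → tsupport g ⊆ U →
      ∫ x in U, lap (fun y => (W y) ^ 2) x * (g x) ^ 2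
        ≤ 2 * ∫ x in U, (W x) ^ 2 * ‖gradient g x‖ ^ 2) :
    ∀ f : EuclideanSpace ℝ (Fin m) → ℝ,
      ContDiff ℝ (⊤ : ℕ∞) f → HasCompactSupport f → tsupport f ⊆ U →
      ∫ x in U, ‖gradient W x‖ ^ 2 / (W x) ^ 2 * (f x) ^ 2
        ≤ ∫ x in U, ‖gradient f x‖ ^ 2 := by
  intro f hf hfc hfU
  set g : EuclideanSpace ℝ (Fin m) → ℝ := fun x => f x / W x with hgdef
  have hWat : ∀ x ∈ U, ContDiffAt ℝ (⊤ : ℕ∞) W x := fun x hx =>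
    hW.contDiffAt (hU.mem_nhds hx)
  have hne : ∀ x ∈ U, W x ≠ 0 := fun x hx => (hWpos x hx).ne'
  have hg0 : ∀ x, x ∉ tsupport f → g x = 0 := fun x hx => by
    simp [hgdef, image_eq_zero_of_notMem_tsupport hx]
  have htg : tsupport g ⊆ tsupport f :=
    closure_minimal (fun x hx => by
      by_contra h; exact hx (hg0 x h)) (isClosed_tsupport f)
  have hgc : HasCompactSupport g := hfc.of_isClosed_subset (isClosed_tsupport g) htg
  have hg : ContDiff ℝ (⊤ : ℕ∞) g := by
    rw [contDiff_iff_contDiffAt]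
    intro x
    by_cases hx : x ∈ U
    · exact hf.contDiffAt.div (hWat x hx) (hne x hx)
    · have hx' : x ∉ tsupport g := fun h => hx (hfU (htg h))
      have := notMem_tsupport_iff_eventuallyEq.1 hx'
      exact (contDiffAt_const (c := (0:ℝ))).congr_of_eventuallyEq this
  have hm := hmain g hg hgc (htg.trans hfU)
  set K := tsupport f with hKdef
  have hK : IsCompact K := hfc
  have hgdiff : Differentiable ℝ g := hg.differentiable (by simp)
  have hfdiff : Differentiable ℝ f := hf.differentiable (by simp)
  have hWdiff : ∀ x ∈ U, DifferentiableAt ℝ W x := fun x hx =>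
    (hWat x hx).differentiableAt (by simp)
  -- partial derivatives of the square of the weight
  let e : Fin m → EuclideanSpace ℝ (Fin m) := fun i => EuclideanSpace.single i 1
  let A : Fin m → EuclideanSpace ℝ (Fin m) → ℝ := fun i y =>
    fderiv ℝ (fun y => (W y) ^ 2) y (e i)
  have hA : ∀ i, ContDiffOn ℝ (⊤ : ℕ∞) (A i) U := fun i =>
    ((hW.pow 2).fderiv_of_isOpen hU (by simp)).clm_apply contDiffOn_const
  have hDA : ∀ i, ContinuousOn (fun x => fderiv ℝ (A i) x (e i)) U := fun i =>
    ((hA i).continuousOn_fderiv_of_isOpen hU (by simp)).clm_apply continuousOn_const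
  have hDW : ∀ i, ContinuousOn (fun x => fderiv ℝ W x (e i)) U := fun i =>
    (hW.continuousOn_fderiv_of_isOpen hU (by simp)).clm_apply continuousOn_const
  have hDh : ∀ h : EuclideanSpace ℝ (Fin m) → ℝ, ContDiff ℝ (⊤ : ℕ∞) h → ∀ i,
      Continuous (fun x => fderiv ℝ h x (e i)) := fun h hh i =>
    (hh.continuous_fderiv (by simp)).clm_apply continuous_const
  have hAeq : ∀ i, ∀ x ∈ U, A i x = 2 * W x * fderiv ℝ W x (e i) := by
    intro i x hx
    have := ((hWdiff x hx).hasFDerivAt.pow 2).fderiv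
    simp only [A, this]
    simp
  have hg2 : ContDiff ℝ (⊤ : ℕ∞) (fun y => (g y) ^ 2) := hg.pow 2
  have hg2eq : ∀ i x, fderiv ℝ (fun y => (g y) ^ 2) x (e i)
      = 2 * g x * fderiv ℝ g x (e i) := by
    intro i x
    have := ((hgdiff x).hasFDerivAt.pow 2).fderiv
    simp only [this]
    simp
  have hfeq : ∀ i, ∀ x ∈ U, fderiv ℝ f x (e i)
      = g x * fderiv ℝ W x (e i) + W x * fderiv ℝ g x (e i) := by
    intro i x hx
    have h1 : f =ᶠ[nhds x] fun y => g y * W y := by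
      filter_upwards [hU.mem_nhds hx] with y hy
      simp [hgdef, div_mul_cancel₀ _ (hne y hy)]
    rw [h1.fderiv_eq, fderiv_fun_mul (hgdiff x) (hWdiff x hx)]
    simp
  have hfd0 : ∀ i x, x ∉ K → fderiv ℝ f x (e i) = 0 := by
    intro i x hx
    rw [(notMem_tsupport_iff_eventuallyEq.1 hx).fderiv_eq]; simp
  have hgd0 : ∀ i x, x ∉ K → fderiv ℝ g x (e i) = 0 := by
    intro i x hx
    rw [(notMem_tsupport_iff_eventuallyEq.1 (fun h => hx (htg h))).fderiv_eq]; simp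
  have htg2 : tsupport (fun y => (g y) ^ 2) ⊆ K :=
    closure_minimal (fun x hx => by
      by_contra h
      exact hx (by simp [hg0 x h])) (isClosed_tsupport f)
  -- integrability
  have hWc := hW.continuousOn
  have hgcont := hg.continuous
  have I1 : ∀ i, Integrable (fun x => fderiv ℝ (A i) x (e i) * (g x) ^ 2) := fun i =>
    hardy_integrable hK hfU ((hDA i).mul (hgcont.pow 2).continuousOn)
      (fun x hx => by simp [hg0 x hx])
  have I2 : ∀ i, Integrable (fun x => A i x * fderiv ℝ (fun y => (g y) ^ 2) x (e i)) := fun i =>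
    hardy_integrable hK hfU ((hA i).continuousOn.mul (hDh _ hg2 i).continuousOn)
      (fun x hx => by simp [hg2eq, hg0 x hx])
  have I3 : ∀ i, Integrable (fun x => A i x * (g x) ^ 2) := fun i =>
    hardy_integrable hK hfU ((hA i).continuousOn.mul (hgcont.pow 2).continuousOn)
      (fun x hx => by simp [hg0 x hx])
  have ibp : ∀ i, ∫ x, A i x * fderiv ℝ (fun y => (g y) ^ 2) x (e i)
      = - ∫ x, fderiv ℝ (A i) x (e i) * (g x) ^ 2 := fun i =>
    integral_mul_fderiv_eq_neg_fderiv_mul_of_integrable (I1 i) (I2 i) (I3 i)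
      (fun x hx => ((hA i).contDiffAt (hU.mem_nhds (hfU (htg2 hx)))).differentiableAt (by simp))
      (fun x _ => hg2.differentiable (by simp) x)
  have I4 : Integrable (fun x => (W x) ^ 2 * ‖gradient g x‖ ^ 2) := by
    simp only [hardy_norm_gradient_sq]
    exact hardy_integrable hK hfU ((hWc.pow 2).mul
      (continuousOn_finsetSum _ fun i _ => ((hDh g hg i).pow 2).continuousOn))
      (fun x hx => by
        rw [Finset.sum_eq_zero fun i _ => by rw [hgd0 i x hx]; simp]; simp)
  have I5 : Integrable (fun x => ‖gradient W x‖ ^ 2 / (W x) ^ 2 * (f x) ^ 2) := by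
    simp only [hardy_norm_gradient_sq]
    exact hardy_integrable hK hfU (((continuousOn_finsetSum _ fun i _ => (hDW i).pow 2).div
      (hWc.pow 2) (fun x hx => pow_ne_zero 2 (hne x hx))).mul (hf.continuous.pow 2).continuousOn)
      (fun x hx => by simp [image_eq_zero_of_notMem_tsupport hx])
  have hpt : ∀ x ∈ U, ‖gradient f x‖ ^ 2 = ((W x) ^ 2 * ‖gradient g x‖ ^ 2
      + (1 / 2) * ∑ i, A i x * fderiv ℝ (fun y => (g y) ^ 2) x (e i))
      + ‖gradient W x‖ ^ 2 / (W x) ^ 2 * (f x) ^ 2 := by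
    intro x hx
    have hfg : ‖gradient W x‖ ^ 2 / (W x) ^ 2 * (f x) ^ 2 = ‖gradient W x‖ ^ 2 * (g x) ^ 2 := by
      simp only [hgdef]
      field_simp
    rw [hfg]
    simp only [hardy_norm_gradient_sq]
    rw [Finset.mul_sum, Finset.mul_sum, Finset.sum_mul, ← Finset.sum_add_distrib,
      ← Finset.sum_add_distrib]
    refine Finset.sum_congr rfl fun i _ => ?_
    have h1 := hfeq i x hx
    have h2 := hAeq i x hx
    have h3 := hg2eq i x
    simp only [e] at h1 h2 h3 ⊢
    rw [h1, h2, h3]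
    ring
  have hS : Integrable (fun x => ∑ i, A i x * fderiv ℝ (fun y => (g y) ^ 2) x (e i)) :=
    integrable_finsetSum _ fun i _ => I2 i
  have hlap : ∫ x in U, lap (fun y => (W y) ^ 2) x * (g x) ^ 2
      = - ∫ x in U, ∑ i, A i x * fderiv ℝ (fun y => (g y) ^ 2) x (e i) := by
    rw [setIntegral_eq_integral_of_forall_compl_eq_zero,
      setIntegral_eq_integral_of_forall_compl_eq_zero]
    · rw [integral_finsetSum _ fun i _ => I2 i]
      simp only [ibp]
      rw [Finset.sum_neg_distrib, neg_neg, ← integral_finsetSum _ fun i _ => I1 i]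
      refine integral_congr_ae (Filter.Eventually.of_forall fun x => ?_)
      simp only [lap, Finset.sum_mul, A, e]
    · intro x hx
      have : x ∉ K := fun h => hx (hfU h)
      simp [hg2eq, hg0 x this]
    · intro x hx
      have : x ∉ K := fun h => hx (hfU h)
      simp [hg0 x this]
  have I6 : Integrable (fun x => (W x) ^ 2 * ‖gradient g x‖ ^ 2
      + (1 / 2) * ∑ i, A i x * fderiv ℝ (fun y => (g y) ^ 2) x (e i)) :=
    I4.add (hS.const_mul _)
  rw [setIntegral_congr_fun hU.measurableSet hpt,
    integral_add I6.integrableOn I5.integrableOn,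
    integral_add I4.integrableOn (hS.const_mul _).integrableOn, integral_const_mul]
  linarith
end

section
/- Let U ⊆ ℝ^m be open, Q, α ∈ ℝ with Q + α ≠ 2, and let ψ be a smooth strictly positive function on U satisfying Δψ = (Q−1)·|∇ψ|²/ψ on U. Then for every f ∈ C_c^∞(U) the weighted Hardy inequality ∫_U ψ^α·(|∇ψ|²/ψ²)·f² dx ≤ (2/(Q+α−2))²·∫_U ψ^α·|∇f|² dx holds. -/
open Real MeasureTheory

lemma hardy_norm_grad_sq {m : ℕ} (f : EuclideanSpace ℝ (Fin m) → ℝ)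
    (x : EuclideanSpace ℝ (Fin m)) :
    ‖gradient f x‖ ^ 2 = ∑ i, (fderiv ℝ f x (EuclideanSpace.single i 1)) ^ 2 := by
  rw [EuclideanSpace.real_norm_sq_eq]
  refine Finset.sum_congr rfl fun i _ => ?_
  rw [← inner_gradient_left, EuclideanSpace.inner_single_right]
  simp

lemma hardy_contDiff {m : ℕ} {F : EuclideanSpace ℝ (Fin m) → ℝ}
    (h : ∀ x ∈ tsupport F, ContDiffAt ℝ 1 F x) : ContDiff ℝ 1 F := by
  rw [contDiff_iff_contDiffAt]
  intro x
  by_cases hx : x ∈ tsupport F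
  · exact h x hx
  · exact contDiffAt_const.congr_of_eventuallyEq (notMem_tsupport_iff_eventuallyEq.mp hx)

lemma hardy_integral_fderiv {m : ℕ} {F : EuclideanSpace ℝ (Fin m) → ℝ}
    (hF : ContDiff ℝ 1 F) (hc : HasCompactSupport F) (v : EuclideanSpace ℝ (Fin m)) :
    Integrable (fun x => fderiv ℝ F x v) ∧ ∫ x, fderiv ℝ F x v = 0 := by
  have hi : Integrable (fun x => fderiv ℝ F x v) :=
    Continuous.integrable_of_hasCompactSupport
      ((hF.continuous_fderiv (by norm_num)).clm_apply continuous_const) (hc.fderiv_apply ℝ v)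
  have hi2 : Integrable F := hF.continuous.integrable_of_hasCompactSupport hc
  refine ⟨hi, ?_⟩
  have := integral_mul_fderiv_eq_neg_fderiv_mul_of_integrable (μ := volume)
    (f := fun _ : EuclideanSpace ℝ (Fin m) => (1 : ℝ)) (g := F) (v := v)
    (by simp) (by simpa using hi) (by simpa using hi2)
    (fun x _ => differentiableAt_const _) (fun x _ => hF.differentiable (by norm_num) x)
  simpa using this

theorem abstract_weighted_hardy_inequality {m : ℕ}
    (U : Set (EuclideanSpace ℝ (Fin m))) (hU : IsOpen U) (Q α : ℝ) (hQα : Q + α ≠ 2)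
    (ψ : EuclideanSpace ℝ (Fin m) → ℝ)
    (hψ : ContDiffOn ℝ (⊤ : ℕ∞) ψ U) (hψpos : ∀ x ∈ U, 0 < ψ x)
    (hψeq : ∀ x ∈ U, lap ψ x = (Q - 1) / ψ x * ‖gradient ψ x‖ ^ 2) :
    ∀ f : EuclideanSpace ℝ (Fin m) → ℝ,
      ContDiff ℝ (⊤ : ℕ∞) f → HasCompactSupport f → tsupport f ⊆ U →
      ∫ x in U, ψ x ^ α * (‖gradient ψ x‖ ^ 2 / (ψ x) ^ 2) * (f x) ^ 2
        ≤ (2 / (Q + α - 2)) ^ 2 * ∫ x in U, ψ x ^ α * ‖gradient f x‖ ^ 2 := by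
  intro f hf hfc hfU
  have hc : Q + α - 2 ≠ 0 := sub_ne_zero.mpr hQα
  have hψA : ∀ x ∈ U, ContDiffAt ℝ (⊤ : ℕ∞) ψ x := fun x hx => hψ.contDiffAt (hU.mem_nhds hx)
  let e : Fin m → EuclideanSpace ℝ (Fin m) := fun i => EuclideanSpace.single i 1
  have hdψ : ∀ x ∈ U, ∀ i, ContDiffAt ℝ 1 (fun y => fderiv ℝ ψ y (e i)) x := by
    intro x hx i
    exact ((hψA x hx).fderiv_right (m := 1) (by norm_cast)).clm_apply contDiffAt_const
  have hdf : Continuous (fderiv ℝ f) := hf.continuous_fderiv (by simp)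
  -- the vector field
  let F : Fin m → EuclideanSpace ℝ (Fin m) → ℝ :=
    fun i x => f x ^ 2 * (ψ x ^ (α - 1) * fderiv ℝ ψ x (e i))
  have hFs : ∀ i, tsupport (F i) ⊆ tsupport f := by
    intro i
    refine closure_mono fun x hx => ?_
    rw [Function.mem_support] at hx ⊢
    intro h0
    exact hx (by simp [F, h0])
  have hFd : ∀ i, ContDiff ℝ 1 (F i) := by
    intro i
    refine hardy_contDiff fun x hx => ?_
    have hxU := hfU (hFs i hx)
    refine ContDiffAt.mul ((hf.contDiffAt.of_le (by norm_cast)).pow 2)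
      (ContDiffAt.mul ?_ (hdψ x hxU i))
    exact ((hψA x hxU).of_le (by norm_cast)).rpow_const_of_ne (hψpos x hxU).ne'
  have hFc : ∀ i, HasCompactSupport (F i) := fun i =>
    hfc.of_isClosed_subset (isClosed_tsupport _) (hFs i)
  have hdiv_int : Integrable (fun x => ∑ i, fderiv ℝ (F i) x (e i)) :=
    integrable_finset_sum _ fun i _ => (hardy_integral_fderiv (hFd i) (hFc i) (e i)).1
  have hdiv : ∫ x in U, ∑ i, fderiv ℝ (F i) x (e i) = 0 := by
    rw [setIntegral_eq_integral_of_forall_compl_eq_zero]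
    · rw [integral_finset_sum _ fun i _ => (hardy_integral_fderiv (hFd i) (hFc i) (e i)).1]
      exact Finset.sum_eq_zero fun i _ => (hardy_integral_fderiv (hFd i) (hFc i) (e i)).2
    · intro x hx
      refine Finset.sum_eq_zero fun i _ => ?_
      rw [fderiv_of_notMem_tsupport ℝ fun h => hx (hfU (hFs i h))]
      simp
  have hD_int : Integrable (fun x => ψ x ^ α * ‖gradient f x‖ ^ 2) := by
    have hs : tsupport (fun x => ψ x ^ α * ‖gradient f x‖ ^ 2) ⊆ tsupport f := by
      refine closure_minimal (fun x hx => ?_) (isClosed_tsupport f)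
      by_contra hn
      apply hx
      simp [hardy_norm_grad_sq, fderiv_of_notMem_tsupport ℝ hn]
    refine Continuous.integrable_of_hasCompactSupport (continuous_of_tsupport fun x hx => ?_)
      (hfc.of_isClosed_subset (isClosed_tsupport _) hs)
    have hxU := hfU (hs hx)
    refine ContinuousAt.mul ((hψA x hxU).continuousAt.rpow_const (Or.inl (hψpos x hxU).ne')) ?_
    simp only [hardy_norm_grad_sq]
    fun_prop
  -- divergence formula
  have hdivF : ∀ x ∈ U, ∑ i, fderiv ℝ (F i) x (e i) =
      2 * f x * ψ x ^ (α - 1) * ∑ i, fderiv ℝ f x (e i) * fderiv ℝ ψ x (e i)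
      + (Q + α - 2) * (ψ x ^ α * (‖gradient ψ x‖ ^ 2 / (ψ x) ^ 2) * (f x) ^ 2) := by
    intro x hx
    have hp := hψpos x hx
    have h1 : ψ x ^ (α - 1) = ψ x ^ α / ψ x := rpow_sub_one hp.ne' α
    have h2 : ψ x ^ (α - 1 - 1) = ψ x ^ α / ψ x ^ 2 := by
      rw [rpow_sub_one hp.ne', h1]; field_simp
    have key : ∀ i, fderiv ℝ (F i) x (e i) =
        2 * f x * ψ x ^ (α - 1) * (fderiv ℝ f x (e i) * fderiv ℝ ψ x (e i))
        + (α - 1) * f x ^ 2 * ψ x ^ (α - 1 - 1) * (fderiv ℝ ψ x (e i)) ^ 2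
        + f x ^ 2 * ψ x ^ (α - 1) *
          fderiv ℝ (fun y => fderiv ℝ ψ y (e i)) x (e i) := by
      intro i
      have hf' : HasFDerivAt f (fderiv ℝ f x) x := (hf.differentiable (by simp) x).hasFDerivAt
      have hψ' : HasFDerivAt ψ (fderiv ℝ ψ x) x :=
        ((hψA x hx).differentiableAt (by simp)).hasFDerivAt
      have hd' := ((hdψ x hx i).differentiableAt (by norm_num)).hasFDerivAt
      have := (hf'.pow 2).mul ((hψ'.rpow_const (p := α - 1) (Or.inl hp.ne')).mul hd')
      rw [show fderiv ℝ (F i) x = _ from this.fderiv]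
      simp
      ring
    have hl := hψeq x hx
    simp only [lap] at hl
    rw [Finset.sum_congr rfl fun i _ => key i, Finset.sum_add_distrib, Finset.sum_add_distrib,
      ← Finset.mul_sum, ← Finset.mul_sum, ← Finset.mul_sum, hl, ← hardy_norm_grad_sq, h2, h1]
    field_simp
    ring
  have hpt : ∀ x ∈ U, ψ x ^ α * (‖gradient ψ x‖ ^ 2 / (ψ x) ^ 2) * (f x) ^ 2 ≤
      (2 / (Q + α - 2)) ^ 2 * (ψ x ^ α * ‖gradient f x‖ ^ 2)
        + 2 / (Q + α - 2) * ∑ i, fderiv ℝ (F i) x (e i) := by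
    intro x hx
    have hp := hψpos x hx
    have hpa : 0 < ψ x ^ α := rpow_pos_of_pos hp α
    have h1 : ψ x ^ (α - 1) = ψ x ^ α / ψ x := rpow_sub_one hp.ne' α
    have hsq : 0 ≤ ψ x ^ α * ∑ i, (2 / (Q + α - 2) * fderiv ℝ f x (e i)
        + f x / ψ x * fderiv ℝ ψ x (e i)) ^ 2 :=
      mul_nonneg hpa.le (Finset.sum_nonneg fun i _ => sq_nonneg _)
    have hexp : ∑ i, (2 / (Q + α - 2) * fderiv ℝ f x (e i)
        + f x / ψ x * fderiv ℝ ψ x (e i)) ^ 2 =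
        (2 / (Q + α - 2)) ^ 2 * ‖gradient f x‖ ^ 2
        + 2 * (2 / (Q + α - 2)) * (f x / ψ x) * ∑ i, fderiv ℝ f x (e i) * fderiv ℝ ψ x (e i)
        + (f x / ψ x) ^ 2 * ‖gradient ψ x‖ ^ 2 := by
      rw [hardy_norm_grad_sq, hardy_norm_grad_sq, Finset.mul_sum, Finset.mul_sum, Finset.mul_sum,
        ← Finset.sum_add_distrib, ← Finset.sum_add_distrib]
      exact Finset.sum_congr rfl fun i _ => by ring
    rw [hexp] at hsq
    rw [hdivF x hx, h1]
    refine le_of_sub_nonneg (hsq.trans_eq ?_)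
    field_simp
    ring
  calc _ ≤ ∫ x in U, ((2 / (Q + α - 2)) ^ 2 * (ψ x ^ α * ‖gradient f x‖ ^ 2)
        + 2 / (Q + α - 2) * ∑ i, fderiv ℝ (F i) x (e i)) := by
        refine integral_mono_of_nonneg ?_
          ((hD_int.integrableOn.const_mul _).add (hdiv_int.integrableOn.const_mul _)) ?_
        · filter_upwards [ae_restrict_mem hU.measurableSet] with x hx
          have := rpow_pos_of_pos (hψpos x hx) α
          simp only [Pi.zero_apply]
          positivity
        · filter_upwards [ae_restrict_mem hU.measurableSet] with x hx
          exact hpt x hx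
    _ = _ := by
        rw [integral_add (hD_int.integrableOn.const_mul _) (hdiv_int.integrableOn.const_mul _),
          integral_const_mul, integral_const_mul, hdiv]
        ring
end

section
/- Let m ≥ 1 and α ∈ ℝ with 2m + α ≠ 0. Then for every f ∈ C_c^∞(ℝ^{2m+1} \ {0}) the homogeneous (Korányi-gauge) Hardy inequality on the Heisenberg group ∫ N^α·((|x|²+|y|²)/N⁴)·f² dξ ≤ (2/(2m+α))²·∫ N^α·|∇_ℍ f|² dξ holds, where N(x,y,z) = ((|x|²+|y|²)² + 16 z²)^{1/4} is the Korányi–Folland gauge. -/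
open Real MeasureTheory

/-- The Heisenberg group `ℍ^m`, identified with `ℝ^m × ℝ^m × ℝ` with coordinates
`ξ = (x, y, z)` and Lebesgue measure. -/
abbrev Heis (m : ℕ) := EuclideanSpace ℝ (Fin m) × EuclideanSpace ℝ (Fin m) × ℝ

/-- The horizontal vector field `X_i = ∂_{x_i} + 2 y_i ∂_z` on the Heisenberg group. -/
noncomputable def Xd {m : ℕ} (i : Fin m) (f : Heis m → ℝ) (ξ : Heis m) : ℝ :=
  fderiv ℝ f ξ (EuclideanSpace.single i 1, 0, 0) + 2 * ξ.2.1 i * fderiv ℝ f ξ (0, 0, 1)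

/-- The horizontal vector field `Y_i = ∂_{y_i} - 2 x_i ∂_z` on the Heisenberg group. -/
noncomputable def Yd {m : ℕ} (i : Fin m) (f : Heis m → ℝ) (ξ : Heis m) : ℝ :=
  fderiv ℝ f ξ (0, EuclideanSpace.single i 1, 0) - 2 * ξ.1 i * fderiv ℝ f ξ (0, 0, 1)

/-- The squared length `|∇_ℍ f|²` of the horizontal gradient on the Heisenberg group. -/
noncomputable def hgradSq {m : ℕ} (f : Heis m → ℝ) (ξ : Heis m) : ℝ :=
  ∑ i : Fin m, ((Xd i f ξ) ^ 2 + (Yd i f ξ) ^ 2)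

/-- The Korányi–Folland gauge `N(x,y,z) = ((|x|² + |y|²)² + 16 z²)^{1/4}`. -/
noncomputable def gaugeN {m : ℕ} (ξ : Heis m) : ℝ :=
  ((‖ξ.1‖ ^ 2 + ‖ξ.2.1‖ ^ 2) ^ 2 + 16 * ξ.2.2 ^ 2) ^ ((1 : ℝ) / 4)

open scoped Topology

/-- `R = |x|² + |y|²`. -/
noncomputable def hR {m : ℕ} (ξ : Heis m) : ℝ := ‖ξ.1‖ ^ 2 + ‖ξ.2.1‖ ^ 2

/-- `P = N⁴`. -/
noncomputable def hP {m : ℕ} (ξ : Heis m) : ℝ := hR ξ ^ 2 + 16 * ξ.2.2 ^ 2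

/-- The horizontal vector field used in the proof. -/
noncomputable def hV {m : ℕ} (ξ : Heis m) : Heis m :=
  (hR ξ • ξ.1 + ξ.2.2 • ξ.2.1, hR ξ • ξ.2.1 - ξ.2.2 • ξ.1, 2 * ξ.2.2 * hR ξ)

theorem hR_nonneg {m : ℕ} (ξ : Heis m) : 0 ≤ hR ξ := by unfold hR; positivity

theorem hP_nonneg {m : ℕ} (ξ : Heis m) : 0 ≤ hP ξ := by unfold hP; positivity

theorem hP_pos {m : ℕ} (ξ : Heis m) (h : ξ ≠ 0) : 0 < hP ξ := by
  refine lt_of_le_of_ne (hP_nonneg ξ) (fun h' => h ?_)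
  have hz : ξ.2.2 = 0 := by
    have : ξ.2.2 ^ 2 = 0 := by
      unfold hP at h'; nlinarith [sq_nonneg (hR ξ), sq_nonneg ξ.2.2]
    simpa using this
  have hr : hR ξ = 0 := by
    have : hR ξ ^ 2 = 0 := by
      unfold hP at h'; nlinarith [sq_nonneg (hR ξ), sq_nonneg ξ.2.2]
    simpa using this
  have hx : ξ.1 = 0 := by
    have : ‖ξ.1‖ ^ 2 = 0 := by
      unfold hR at hr; nlinarith [sq_nonneg ‖ξ.1‖, sq_nonneg ‖ξ.2.1‖]
    simpa using this
  have hy : ξ.2.1 = 0 := by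
    have : ‖ξ.2.1‖ ^ 2 = 0 := by
      unfold hR at hr; nlinarith [sq_nonneg ‖ξ.1‖, sq_nonneg ‖ξ.2.1‖]
    simpa using this
  exact Prod.ext hx (Prod.ext hy hz)

theorem hR_contDiff {m : ℕ} : ContDiff ℝ (⊤ : ℕ∞) (hR : Heis m → ℝ) := by
  unfold hR
  exact (contDiff_fst.norm_sq ℝ).add (contDiff_snd.fst.norm_sq ℝ)

theorem hP_contDiff {m : ℕ} : ContDiff ℝ (⊤ : ℕ∞) (hP : Heis m → ℝ) := by
  unfold hP
  exact (hR_contDiff.pow 2).add (contDiff_const.mul (contDiff_snd.snd.pow 2))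

theorem hR_fderiv {m : ℕ} (ξ v : Heis m) :
    fderiv ℝ hR ξ v = 2 * inner ℝ ξ.1 v.1 + 2 * inner ℝ ξ.2.1 v.2.1 := by
  have h1 : HasFDerivAt (fun η : Heis m => η.1) (ContinuousLinearMap.fst ℝ _ _) ξ :=
    hasFDerivAt_fst
  have h2 : HasFDerivAt (fun η : Heis m => η.2.1)
      ((ContinuousLinearMap.fst ℝ _ _).comp (ContinuousLinearMap.snd ℝ _ _)) ξ :=
    hasFDerivAt_fst.comp ξ hasFDerivAt_snd
  have h := h1.norm_sq.add h2.norm_sq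
  have e : fderiv ℝ hR ξ = _ := h.fderiv
  rw [e]
  simp

theorem hR_hasFDerivAt {m : ℕ} (ξ : Heis m) : HasFDerivAt hR (fderiv ℝ hR ξ) ξ :=
  (hR_contDiff.differentiable (by simp) ξ).hasFDerivAt

theorem z_hasFDerivAt {m : ℕ} (ξ : Heis m) : HasFDerivAt (fun η : Heis m => η.2.2)
    ((ContinuousLinearMap.snd ℝ _ _).comp (ContinuousLinearMap.snd ℝ _ _)) ξ :=
  hasFDerivAt_snd.comp ξ hasFDerivAt_snd

theorem x_hasFDerivAt {m : ℕ} (i : Fin m) (ξ : Heis m) : HasFDerivAt (fun η : Heis m => η.1 i)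
    ((EuclideanSpace.proj i : EuclideanSpace ℝ (Fin m) →L[ℝ] ℝ).comp
      (ContinuousLinearMap.fst ℝ _ _)) ξ :=
  (EuclideanSpace.proj i : EuclideanSpace ℝ (Fin m) →L[ℝ] ℝ).hasFDerivAt.comp ξ hasFDerivAt_fst

theorem y_hasFDerivAt {m : ℕ} (i : Fin m) (ξ : Heis m) : HasFDerivAt (fun η : Heis m => η.2.1 i)
    ((EuclideanSpace.proj i : EuclideanSpace ℝ (Fin m) →L[ℝ] ℝ).comp
      ((ContinuousLinearMap.fst ℝ _ _).comp (ContinuousLinearMap.snd ℝ _ _))) ξ :=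
  (EuclideanSpace.proj i : EuclideanSpace ℝ (Fin m) →L[ℝ] ℝ).hasFDerivAt.comp ξ
    (hasFDerivAt_fst.comp ξ hasFDerivAt_snd)

theorem hP_fderiv_V {m : ℕ} (ξ : Heis m) : fderiv ℝ hP ξ (hV ξ) = 4 * hR ξ * hP ξ := by
  have h := ((hR_hasFDerivAt ξ).pow 2).add (((z_hasFDerivAt ξ).pow 2).const_mul 16)
  have e : fderiv ℝ hP ξ = _ := h.fderiv
  rw [e]
  have e2 : hR ξ = ‖ξ.1‖ ^ 2 + ‖ξ.2.1‖ ^ 2 := rfl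
  simp [hR_fderiv, hV, hP, inner_add_right, inner_sub_right, inner_smul_right,
    real_inner_comm ξ.1 ξ.2.1]
  rw [e2]
  ring

theorem rpow_mul_contDiff {m : ℕ} (s : ℝ) (n : ℕ) (g : Heis m → ℝ) (hg : ContDiff ℝ n g)
    (h0 : g =ᶠ[𝓝 0] 0) : ContDiff ℝ n (fun ξ => hP ξ ^ s * g ξ) := by
  rw [contDiff_iff_contDiffAt]
  intro ξ
  by_cases h : ξ = 0
  · subst h
    have : (fun ξ => hP ξ ^ s * g ξ) =ᶠ[𝓝 0] fun _ => (0 : ℝ) := by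
      filter_upwards [h0] with η hη
      simp [hη]
    exact contDiffAt_const.congr_of_eventuallyEq this
  · refine ContDiffAt.mul ?_ hg.contDiffAt
    refine ContDiffAt.rpow_const_of_ne ?_ (hP_pos ξ h).ne'
    exact (hP_contDiff.of_le (by exact_mod_cast le_top)).contDiffAt

/-- Decomposition of the derivative along a vector. -/
theorem fderiv_decomp {m : ℕ} (L : Heis m →L[ℝ] ℝ) (v : Heis m) :
    L v = ∑ i : Fin m, (v.1 i * L (EuclideanSpace.single i 1, 0, 0)
      + v.2.1 i * L (0, EuclideanSpace.single i 1, 0)) + v.2.2 * L (0, 0, 1) := by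
  have h1 : ∀ x : EuclideanSpace ℝ (Fin m), x = ∑ i, x i • EuclideanSpace.single i (1 : ℝ) := by
    intro x
    ext j
    simp [Finset.sum_apply, Pi.single_apply]
  have hx : L (v.1, 0, 0) = ∑ i, v.1 i * L (EuclideanSpace.single i 1, 0, 0) := by
    have : L (v.1, 0, 0) = (L.comp (ContinuousLinearMap.inl ℝ _ _)) v.1 := rfl
    rw [this]
    conv_lhs => rw [h1 v.1]
    rw [map_sum]
    refine Finset.sum_congr rfl fun i _ => ?_
    rw [map_smul]
    rfl
  have hy : L (0, v.2.1, 0) = ∑ i, v.2.1 i * L (0, EuclideanSpace.single i 1, 0) := by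
    have : L (0, v.2.1, 0) = (L.comp ((ContinuousLinearMap.inr ℝ _ _).comp
      (ContinuousLinearMap.inl ℝ _ _))) v.2.1 := by simp
    rw [this]
    conv_lhs => rw [h1 v.2.1]
    rw [map_sum]
    simp
  have hz : L (0, 0, v.2.2) = v.2.2 * L (0, 0, 1) := by
    rw [← smul_eq_mul, ← map_smul]; simp
  have hv : v = (v.1, 0, 0) + (0, v.2.1, 0) + (0, 0, v.2.2) := by
    ext <;> simp
  rw [Finset.sum_add_distrib, ← hx, ← hy, ← hz, ← map_add, ← map_add, ← hv]

theorem hR_sum {m : ℕ} (ξ : Heis m) : hR ξ = ∑ i, (ξ.1 i ^ 2 + ξ.2.1 i ^ 2) := by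
  simp [hR, EuclideanSpace.norm_sq_eq, Finset.sum_add_distrib]

/-- The derivative along `hV` is horizontal. -/
theorem fderiv_V {m : ℕ} (f : Heis m → ℝ) (ξ : Heis m) :
    fderiv ℝ f ξ (hV ξ) = ∑ i : Fin m, ((hR ξ * ξ.1 i + ξ.2.2 * ξ.2.1 i) * Xd i f ξ
      + (hR ξ * ξ.2.1 i - ξ.2.2 * ξ.1 i) * Yd i f ξ) := by
  rw [fderiv_decomp]
  have : (hV ξ).2.2 = ∑ i, 2 * ξ.2.2 * (ξ.1 i ^ 2 + ξ.2.1 i ^ 2) := by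
    rw [← Finset.mul_sum, ← hR_sum]; rfl
  rw [this, Finset.sum_mul, ← Finset.sum_add_distrib]
  refine Finset.sum_congr rfl fun i _ => ?_
  simp [hV, Xd, Yd]
  ring

theorem fderiv_V_sq_le {m : ℕ} (f : Heis m → ℝ) (ξ : Heis m) :
    (fderiv ℝ f ξ (hV ξ)) ^ 2 ≤ hR ξ * hP ξ * hgradSq f ξ := by
  have hcs := Finset.sum_mul_sq_le_sq_mul_sq (Finset.univ : Finset (Fin m ⊕ Fin m))
    (Sum.elim (fun i => hR ξ * ξ.1 i + ξ.2.2 * ξ.2.1 i)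
      (fun i => hR ξ * ξ.2.1 i - ξ.2.2 * ξ.1 i))
    (Sum.elim (fun i => Xd i f ξ) (fun i => Yd i f ξ))
  simp only [Fintype.sum_sum_type, Sum.elim_inl, Sum.elim_inr, ← Finset.sum_add_distrib] at hcs
  rw [fderiv_V]
  refine hcs.trans ?_
  have hg : 0 ≤ hgradSq f ξ := Finset.sum_nonneg fun i _ => by positivity
  refine mul_le_mul_of_nonneg_right ?_ hg
  have : ∑ i : Fin m, ((hR ξ * ξ.1 i + ξ.2.2 * ξ.2.1 i) ^ 2
      + (hR ξ * ξ.2.1 i - ξ.2.2 * ξ.1 i) ^ 2) = (hR ξ ^ 2 + ξ.2.2 ^ 2) * hR ξ := by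
    conv_rhs => rw [hR_sum ξ, ← hR_sum ξ]
    nth_rewrite 4 [hR_sum ξ]
    rw [Finset.mul_sum]
    refine Finset.sum_congr rfl fun i _ => ?_
    ring
  rw [this, hP]
  nlinarith [hR_nonneg ξ, mul_nonneg (hR_nonneg ξ) (sq_nonneg ξ.2.2)]

theorem ibp {m : ℕ} (p φ : Heis m → ℝ) (hp : ContDiff ℝ 1 p) (hφ : ContDiff ℝ 1 φ)
    (hc : HasCompactSupport φ) (v : Heis m) :
    ∫ ξ, p ξ * fderiv ℝ φ ξ v = - ∫ ξ, fderiv ℝ p ξ v * φ ξ := by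
  have c1 : Continuous fun ξ => fderiv ℝ φ ξ v :=
    (hφ.continuous_fderiv (by simp)).clm_apply continuous_const
  have c2 : Continuous fun ξ => fderiv ℝ p ξ v :=
    (hp.continuous_fderiv (by simp)).clm_apply continuous_const
  have i0 : (volume : Measure (EuclideanSpace ℝ (Fin m) × ℝ)).IsAddHaarMeasure :=
    Measure.prod.instIsAddHaarMeasure _ _
  have i0' : (volume : Measure (Heis m)).IsAddHaarMeasure :=
    Measure.prod.instIsAddHaarMeasure _ _
  refine integral_mul_fderiv_eq_neg_fderiv_mul_of_integrable ?_ ?_ ?_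
    (fun x _ => hp.differentiable (by simp) x) (fun x _ => hφ.differentiable (by simp) x)
  · exact (c2.mul hφ.continuous).integrable_of_hasCompactSupport hc.mul_left
  · exact (hp.continuous.mul c1).integrable_of_hasCompactSupport
      (hc.fderiv_apply ℝ v).mul_left
  · exact (hp.continuous.mul hφ.continuous).integrable_of_hasCompactSupport hc.mul_left

theorem divergence {m : ℕ} (φ : Heis m → ℝ) (hφ : ContDiff ℝ 1 φ) (hc : HasCompactSupport φ) :
    ∫ ξ, fderiv ℝ φ ξ (hV ξ) = - ∫ ξ, (2 * (m : ℝ) + 4) * hR ξ * φ ξ := by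
  have cR : ContDiff ℝ 1 (hR : Heis m → ℝ) := hR_contDiff.of_le (by exact_mod_cast le_top)
  have cz : ContDiff ℝ 1 (fun ξ : Heis m => ξ.2.2) := contDiff_snd.snd
  have cx : ∀ i, ContDiff ℝ 1 (fun ξ : Heis m => ξ.1 i) := fun i =>
    (EuclideanSpace.proj i : EuclideanSpace ℝ (Fin m) →L[ℝ] ℝ).contDiff.comp contDiff_fst
  have cy : ∀ i, ContDiff ℝ 1 (fun ξ : Heis m => ξ.2.1 i) := fun i =>
    (EuclideanSpace.proj i : EuclideanSpace ℝ (Fin m) →L[ℝ] ℝ).contDiff.comp contDiff_snd.fst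
  have ca : ∀ i, ContDiff ℝ 1 (fun ξ : Heis m => (hV ξ).1 i) := fun i =>
    (cR.mul (cx i)).add (cz.mul (cy i))
  have cb : ∀ i, ContDiff ℝ 1 (fun ξ : Heis m => (hV ξ).2.1 i) := fun i =>
    (cR.mul (cy i)).sub (cz.mul (cx i))
  have cc : ContDiff ℝ 1 (fun ξ : Heis m => (hV ξ).2.2) :=
    (contDiff_const.mul cz).mul cR
  have da : ∀ i (ξ : Heis m), fderiv ℝ (fun ξ : Heis m => (hV ξ).1 i) ξ
      (EuclideanSpace.single i 1, 0, 0) = hR ξ + 2 * ξ.1 i ^ 2 := by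
    intro i ξ
    have h := ((hR_hasFDerivAt ξ).mul (x_hasFDerivAt i ξ)).add
      ((z_hasFDerivAt ξ).mul (y_hasFDerivAt i ξ))
    have e : fderiv ℝ (fun ξ : Heis m => (hV ξ).1 i) ξ = _ := h.fderiv
    rw [e]
    simp [hR_fderiv, EuclideanSpace.inner_single_right]
    ring
  have db : ∀ i (ξ : Heis m), fderiv ℝ (fun ξ : Heis m => (hV ξ).2.1 i) ξ
      (0, EuclideanSpace.single i 1, 0) = hR ξ + 2 * ξ.2.1 i ^ 2 := by
    intro i ξ
    have h := ((hR_hasFDerivAt ξ).mul (y_hasFDerivAt i ξ)).sub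
      ((z_hasFDerivAt ξ).mul (x_hasFDerivAt i ξ))
    have e : fderiv ℝ (fun ξ : Heis m => (hV ξ).2.1 i) ξ = _ := h.fderiv
    rw [e]
    simp [hR_fderiv, EuclideanSpace.inner_single_right]
    ring
  have dc : ∀ (ξ : Heis m), fderiv ℝ (fun ξ : Heis m => (hV ξ).2.2) ξ
      (0, 0, 1) = 2 * hR ξ := by
    intro ξ
    have h := ((z_hasFDerivAt ξ).const_mul 2).mul (hR_hasFDerivAt ξ)
    have e : fderiv ℝ (fun ξ : Heis m => (hV ξ).2.2) ξ = _ := h.fderiv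
    rw [e]
    simp [hR_fderiv]
    ring
  have i1 : ∀ (p : Heis m → ℝ) (v : Heis m), ContDiff ℝ 1 p →
      Integrable (fun ξ => p ξ * fderiv ℝ φ ξ v) := by
    intro p v hp
    exact (hp.continuous.mul ((hφ.continuous_fderiv (by simp)).clm_apply
      continuous_const)).integrable_of_hasCompactSupport (hc.fderiv_apply ℝ v).mul_left
  have i2 : ∀ (p : Heis m → ℝ) (v : Heis m), ContDiff ℝ 1 p →
      Integrable (fun ξ => fderiv ℝ p ξ v * φ ξ) := by
    intro p v hp
    exact (((hp.continuous_fderiv (by simp)).clm_apply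
      continuous_const).mul hφ.continuous).integrable_of_hasCompactSupport hc.mul_left
  simp_rw [fun ξ => fderiv_decomp (fderiv ℝ φ ξ) (hV ξ)]
  have i4 : ∀ i, Integrable fun ξ : Heis m =>
      (hV ξ).1 i * fderiv ℝ φ ξ (EuclideanSpace.single i 1, 0, 0)
      + (hV ξ).2.1 i * fderiv ℝ φ ξ (0, EuclideanSpace.single i 1, 0) :=
    fun i => (i1 _ _ (ca i)).add (i1 _ _ (cb i))
  rw [integral_add (integrable_finsetSum _ fun i _ => i4 i)
    (i1 _ _ cc), integral_finsetSum _ fun i _ => i4 i]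
  have e1 : ∀ i, ∫ ξ, ((hV ξ).1 i * fderiv ℝ φ ξ (EuclideanSpace.single i 1, 0, 0)
      + (hV ξ).2.1 i * fderiv ℝ φ ξ (0, EuclideanSpace.single i 1, 0))
      = - ∫ ξ, (2 * hR ξ + 2 * (ξ.1 i ^ 2 + ξ.2.1 i ^ 2)) * φ ξ := by
    intro i
    rw [integral_add (i1 _ _ (ca i)) (i1 _ _ (cb i)), ibp _ _ (ca i) hφ hc,
      ibp _ _ (cb i) hφ hc, ← neg_add, ← integral_add (i2 _ _ (ca i)) (i2 _ _ (cb i))]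
    congr 2
    ext ξ
    rw [da, db]; ring
  have i3 : ∀ i, Integrable fun ξ : Heis m =>
      (2 * hR ξ + 2 * (ξ.1 i ^ 2 + ξ.2.1 i ^ 2)) * φ ξ := by
    intro i
    refine ((i2 _ (EuclideanSpace.single i 1, 0, 0) (ca i)).add
      (i2 _ (0, EuclideanSpace.single i 1, 0) (cb i))).congr (Filter.Eventually.of_forall ?_)
    intro ξ
    simp only [Pi.add_apply]
    rw [da, db]; ring
  rw [Finset.sum_congr rfl fun i _ => e1 i, ibp _ _ cc hφ hc, Finset.sum_neg_distrib,
    ← integral_finsetSum _ fun i _ => i3 i, ← neg_add,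
    ← integral_add (integrable_finsetSum _ fun i _ => i3 i) (i2 _ _ cc)]
  congr 2
  ext ξ
  rw [dc, ← Finset.sum_mul, Finset.sum_add_distrib, ← Finset.mul_sum, ← Finset.mul_sum, ← hR_sum]
  simp
  ring

theorem homogeneous_hardy_heisenberg (m : ℕ) (hm : 1 ≤ m)
    (α : ℝ) (hα : 2 * (m : ℝ) + α ≠ 0)
    (f : Heis m → ℝ) (hf : ContDiff ℝ (⊤ : ℕ∞) f) (hsupp : HasCompactSupport f)
    (h0 : tsupport f ⊆ {ξ : Heis m | ξ ≠ 0}) :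
    ∫ ξ : Heis m,
        gaugeN ξ ^ α * ((‖ξ.1‖ ^ 2 + ‖ξ.2.1‖ ^ 2) / gaugeN ξ ^ 4) * (f ξ) ^ 2
      ≤ (2 / (2 * (m : ℝ) + α)) ^ 2
        * ∫ ξ : Heis m, gaugeN ξ ^ α * hgradSq f ξ := by
  have hf0 : f =ᶠ[𝓝 0] 0 := by
    rw [← notMem_tsupport_iff_eventuallyEq]
    intro h
    exact h0 h rfl
  have hfz : f 0 = 0 := hf0.self_of_nhds
  have hf1 : ContDiff ℝ 1 f := hf.of_le (by exact_mod_cast le_top)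
  have hdf : Continuous (fderiv ℝ f) := hf1.continuous_fderiv (by simp)
  have hdf0 : fderiv ℝ f =ᶠ[𝓝 0] 0 := by
    refine hf0.fderiv.trans ?_
    simp
  set γ : ℝ := (α - 4) / 4 with hγ
  have hN : ∀ ξ : Heis m, gaugeN ξ = hP ξ ^ ((1 : ℝ) / 4) := fun ξ => rfl
  have hNα : ∀ ξ : Heis m, gaugeN ξ ^ α = hP ξ ^ (α / 4) := by
    intro ξ
    rw [hN, ← Real.rpow_mul (hP_nonneg ξ)]
    congr 1; ring
  have hN4 : ∀ ξ : Heis m, gaugeN ξ ^ 4 = hP ξ := by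
    intro ξ
    rw [hN, ← Real.rpow_natCast, ← Real.rpow_mul (hP_nonneg ξ)]
    norm_num
  have hPγ : ∀ ξ : Heis m, ξ ≠ 0 → hP ξ ^ (α / 4) = hP ξ ^ γ * hP ξ := by
    intro ξ h
    have := Real.rpow_add_one (hP_pos ξ h).ne' γ
    rw [← this, hγ]
    congr 1; ring
  -- the test function
  set φ : Heis m → ℝ := fun ξ => hP ξ ^ γ * (f ξ) ^ 2 with hφdef
  have hφ : ContDiff ℝ 1 φ := by
    refine rpow_mul_contDiff γ 1 _ (hf1.pow 2) ?_
    filter_upwards [hf0] with ξ h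
    simp [h]
  have hφc : HasCompactSupport φ := by
    refine HasCompactSupport.mul_left ?_
    refine hsupp.mono ?_
    intro ξ h h'
    exact h (by simp [h'])
  have hLHS : ∀ ξ : Heis m, gaugeN ξ ^ α * ((‖ξ.1‖ ^ 2 + ‖ξ.2.1‖ ^ 2) / gaugeN ξ ^ 4)
      * (f ξ) ^ 2 = hR ξ * φ ξ := by
    intro ξ
    by_cases h : ξ = 0
    · subst h; simp [hfz, hφdef]
    · rw [hNα, hN4, hPγ ξ h, hφdef]
      have := (hP_pos ξ h).ne'
      change _ * _ * (hR ξ / _) * _ = _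
      field_simp
  have hgc : Continuous (hgradSq f) := by
    unfold hgradSq Xd Yd
    fun_prop
  have hg0 : hgradSq f =ᶠ[𝓝 0] 0 := by
    filter_upwards [hdf0] with ξ h
    simp [hgradSq, Xd, Yd, h]
  have hgs : HasCompactSupport (hgradSq f) := by
    refine (hsupp.fderiv (𝕜 := ℝ)).mono ?_
    intro ξ h h'
    exact h (by simp [hgradSq, Xd, Yd, h'])
  have hiA : Integrable (fun ξ => hR ξ * φ ξ) :=
    (hR_contDiff.continuous.mul hφ.continuous).integrable_of_hasCompactSupport hφc.mul_left
  have hiB : Integrable (fun ξ => hP ξ ^ (α / 4) * hgradSq f ξ) := by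
    have : Continuous (fun ξ => hP ξ ^ (α / 4) * hgradSq f ξ) := by
      have := rpow_mul_contDiff (α / 4) 0 _ (by simpa using hgc) hg0
      exact this.continuous
    exact this.integrable_of_hasCompactSupport hgs.mul_left
  simp_rw [hLHS, hNα]
  set c : ℝ := 2 * (m : ℝ) + α with hc
  have hdiv := divergence φ hφ hφc
  -- derivative of the test function
  have hdφ : ∀ ξ, fderiv ℝ φ ξ (hV ξ)
      = 2 * (hP ξ ^ γ * f ξ * fderiv ℝ f ξ (hV ξ)) + (α - 4) * (hR ξ * φ ξ) := by
    intro ξ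
    by_cases h : ξ = 0
    · subst h
      have : hV (0 : Heis m) = 0 := by simp [hV, hR]
      rw [this]; simp [hfz, hφdef]
    · have hp := hP_pos ξ h
      have d1 : HasFDerivAt hP (fderiv ℝ hP ξ) ξ :=
        (hP_contDiff.differentiable (by simp) ξ).hasFDerivAt
      have d2 : HasFDerivAt f (fderiv ℝ f ξ) ξ :=
        (hf1.differentiable (by simp) ξ).hasFDerivAt
      have d := (d1.rpow_const (p := γ) (Or.inl hp.ne')).mul (d2.pow 2)
      have e : fderiv ℝ φ ξ = _ := d.fderiv
      rw [e]
      simp [hP_fderiv_V, hφdef]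
      have : hP ξ ^ (γ - 1) * hP ξ = hP ξ ^ γ := by
        rw [← Real.rpow_add_one hp.ne']; congr 1; ring
      rw [← this, hγ]
      ring
  have hcont : Continuous fun ξ => fderiv ℝ φ ξ (hV ξ) := by
    refine (hφ.continuous_fderiv (by simp)).clm_apply ?_
    have := (hR_contDiff (m := m)).continuous
    unfold hV
    fun_prop
  have hiD : Integrable fun ξ => fderiv ℝ φ ξ (hV ξ) := by
    refine hcont.integrable_of_hasCompactSupport ?_
    refine (hφc.fderiv (𝕜 := ℝ)).mono ?_
    intro ξ h h'
    exact h (by simp [h'])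
  have key : c * ∫ ξ, hR ξ * φ ξ
      = - ∫ ξ, 2 * (hP ξ ^ γ * f ξ * fderiv ℝ f ξ (hV ξ)) := by
    have e1 : ∀ ξ, 2 * (hP ξ ^ γ * f ξ * fderiv ℝ f ξ (hV ξ))
        = fderiv ℝ φ ξ (hV ξ) - (α - 4) * (hR ξ * φ ξ) := by
      intro ξ; rw [hdφ]; ring
    simp_rw [e1]
    rw [integral_sub hiD (hiA.const_mul _), hdiv]
    simp_rw [mul_assoc _ (hR _) (φ _)]
    rw [integral_const_mul, integral_const_mul, hc]
    ring
  have hiE : Integrable fun ξ => 2 * (hP ξ ^ γ * f ξ * fderiv ℝ f ξ (hV ξ)) := by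
    refine (hiD.sub (hiA.const_mul (α - 4))).congr (Filter.Eventually.of_forall ?_)
    intro ξ
    simp only [Pi.sub_apply]
    rw [hdφ]; ring
  have hpt : ∀ ξ, -c * (2 * (hP ξ ^ γ * f ξ * fderiv ℝ f ξ (hV ξ)))
      ≤ c ^ 2 / 2 * (hR ξ * φ ξ) + 2 * (hP ξ ^ (α / 4) * hgradSq f ξ) := by
    intro ξ
    have hg : 0 ≤ hgradSq f ξ := Finset.sum_nonneg fun i _ => by positivity
    by_cases h : ξ = 0
    · subst h
      have := Real.rpow_nonneg (hP_nonneg (0 : Heis m)) (α / 4)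
      simp [hfz, hφdef]
      positivity
    · rw [hPγ ξ h, hφdef]
      have hp := hP_nonneg ξ
      have hr := hR_nonneg ξ
      have hs := fderiv_V_sq_le f ξ
      have hpg : 0 ≤ hP ξ ^ γ := Real.rpow_nonneg hp γ
      have main : -c * 2 * f ξ * fderiv ℝ f ξ (hV ξ)
          ≤ c ^ 2 / 2 * (hR ξ * f ξ ^ 2) + 2 * (hP ξ * hgradSq f ξ) := by
        refine le_trans (le_abs_self _) (abs_le_of_sq_le_sq ?_ (by positivity))
        have h1 := mul_le_mul_of_nonneg_left hs
          (show 0 ≤ 4 * c ^ 2 * f ξ ^ 2 by positivity)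
        nlinarith [sq_nonneg (c ^ 2 / 2 * (hR ξ * f ξ ^ 2) - 2 * (hP ξ * hgradSq f ξ))]
      have := mul_le_mul_of_nonneg_left main hpg
      simp only
      linarith
  have hfin := integral_mono (hiE.const_mul (-c))
    ((hiA.const_mul (c ^ 2 / 2)).add (hiB.const_mul 2)) hpt
  simp only [Pi.add_apply] at hfin
  rw [integral_const_mul (-c), integral_add (hiA.const_mul _) (hiB.const_mul _),
    integral_const_mul (c ^ 2 / 2), integral_const_mul 2 (fun ξ => hP ξ ^ (α / 4) * hgradSq f ξ)] at hfin
  have hc2 : 0 < c ^ 2 := by positivity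
  rw [div_pow, div_mul_eq_mul_div, le_div_iff₀ hc2]
  have : -c * ∫ ξ, 2 * (hP ξ ^ γ * f ξ * fderiv ℝ f ξ (hV ξ))
      = c ^ 2 * ∫ ξ, hR ξ * φ ξ := by
    rw [pow_two, mul_assoc, key]; ring
  rw [this] at hfin
  linarith
end

section
/- Let m ≥ 3 and let f ∈ C_c^∞(ℝ^m). For t > 0 define the heat semigroup P_t f(x) = (4πt)^{−m/2}·∫_{ℝ^m} e^{−|x−y|²/(4t)}·f(y) dy. Then for every t > 0 and every x ∈ ℝ^m the pointwise multiplicative subcommutation |x|^{m−2}·(P_t f(x))² ≤ P_t(|·|^{m−2}·f(·)²)(x) holds. -/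
open Real MeasureTheory

/-- The Euclidean heat semigroup
`P_t f (x) = (4πt)^{-m/2} ∫ e^{-|x-y|²/(4t)} f(y) dy` on `ℝ^m`. -/
noncomputable def heatP (m : ℕ) (t : ℝ) (f : EuclideanSpace ℝ (Fin m) → ℝ)
    (x : EuclideanSpace ℝ (Fin m)) : ℝ :=
  (4 * Real.pi * t) ^ (-(m : ℝ) / 2)
    * ∫ y : EuclideanSpace ℝ (Fin m), Real.exp (-‖x - y‖ ^ 2 / (4 * t)) * f y

/-- Gaussian times Gaussian, as a lower integral. -/
lemma aux_gauss (m : ℕ) (β b : ℝ) (hβ : 0 < β) (hb : 0 < b) (x : EuclideanSpace ℝ (Fin m)) :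
    ∫⁻ y : EuclideanSpace ℝ (Fin m),
      ENNReal.ofReal (Real.exp (-β * ‖x - y‖ ^ 2) * Real.exp (-b * ‖y‖ ^ 2))
      = ENNReal.ofReal ((π / (β + b)) ^ ((m : ℝ) / 2)
          * Real.exp (-(β * b / (β + b)) * ‖x‖ ^ 2)) := by
  have hs : 0 < β + b := by positivity
  have key : ∀ y : EuclideanSpace ℝ (Fin m),
      Real.exp (-β * ‖x - y‖ ^ 2) * Real.exp (-b * ‖y‖ ^ 2)
      = Real.exp (-(β + b) * ‖y - (β / (β + b)) • x‖ ^ 2)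
          * Real.exp (-(β * b / (β + b)) * ‖x‖ ^ 2) := by
    intro y
    rw [← Real.exp_add, ← Real.exp_add]
    congr 1
    rw [@norm_sub_sq_real, @norm_sub_sq_real, inner_smul_right, norm_smul, real_inner_comm,
      Real.norm_eq_abs, mul_pow, sq_abs]
    field_simp
    ring
  have h0 : ∫ y : EuclideanSpace ℝ (Fin m), Real.exp (-(β + b) * ‖y - (β / (β + b)) • x‖ ^ 2)
      = (π / (β + b)) ^ ((m : ℝ) / 2) := by
    rw [integral_sub_right_eq_self
      (fun y : EuclideanSpace ℝ (Fin m) => Real.exp (-(β + b) * ‖y‖ ^ 2)),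
      GaussianFourier.integral_rexp_neg_mul_sq_norm hs]
    simp
  have hp : 0 < (π / (β + b)) ^ ((m : ℝ) / 2) := by positivity
  have hi : Integrable (fun y : EuclideanSpace ℝ (Fin m) =>
      Real.exp (-(β + b) * ‖y - (β / (β + b)) • x‖ ^ 2)) := by
    by_contra h
    rw [integral_undef h] at h0
    exact hp.ne h0
  simp_rw [key]
  rw [← ofReal_integral_eq_lintegral_ofReal (hi.mul_const _)
    (Filter.Eventually.of_forall fun y => by positivity), integral_mul_const, h0]

lemma aux_gamma (a r : ℝ) (ha : 0 < a) (hr : 0 < r) :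
    ∫⁻ b in Set.Ioi (0 : ℝ), ENNReal.ofReal (b ^ (a - 1) * Real.exp (-b * r))
      = ENNReal.ofReal ((1 / r) ^ a * Real.Gamma a) := by
  have h0 := Real.integral_rpow_mul_exp_neg_mul_Ioi ha hr
  have hG := Real.Gamma_pos_of_pos ha
  have hp : 0 < (1 / r) ^ a * Real.Gamma a := by positivity
  have e : ∀ b : ℝ, -b * r = -(r * b) := fun b => by ring
  simp_rw [e]
  have hi : Integrable (fun b : ℝ => b ^ (a - 1) * Real.exp (-(r * b)))
      (volume.restrict (Set.Ioi (0 : ℝ))) := by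
    by_contra h
    rw [integral_undef h] at h0
    exact hp.ne h0
  rw [← ofReal_integral_eq_lintegral_ofReal hi, h0]
  filter_upwards [self_mem_ae_restrict measurableSet_Ioi] with b hb
  have : (0 : ℝ) < b := hb
  positivity

lemma aux_cov (a β r : ℝ) (hβ : 0 < β) :
    ∫⁻ b in Set.Ioi (0 : ℝ), ENNReal.ofReal
        (b ^ (a - 1) * ((β / (β + b)) ^ (a + 1) * Real.exp (-(β * b / (β + b)) * r)))
      ≤ ∫⁻ b in Set.Ioi (0 : ℝ), ENNReal.ofReal (b ^ (a - 1) * Real.exp (-b * r)) := by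
  have hd : ∀ b ∈ Set.Ioi (0 : ℝ), HasDerivWithinAt (fun b : ℝ => β * b / (β + b))
      (β ^ 2 / (β + b) ^ 2) (Set.Ioi 0) b := by
    intro b hb
    have hb : (0 : ℝ) < b := hb
    have hne : β + b ≠ 0 := by positivity
    have h1 : HasDerivAt (fun b : ℝ => β * b) β b := by
      simpa using (hasDerivAt_id b).const_mul β
    have h2 : HasDerivAt (fun b : ℝ => β + b) 1 b := by
      simpa using (hasDerivAt_id b).const_add β
    have h3 := (h1.div h2 hne).hasDerivWithinAt (s := Set.Ioi 0)
    have e : β ^ 2 / (β + b) ^ 2 = (β * (β + b) - β * b * 1) / (β + b) ^ 2 := by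
      congr 1
      ring
    rw [e]
    exact h3
  have hinj : Set.InjOn (fun b : ℝ => β * b / (β + b)) (Set.Ioi 0) := by
    intro b hb c hc h
    have hb : (0 : ℝ) < b := hb
    have hc : (0 : ℝ) < c := hc
    simp only at h
    rw [div_eq_div_iff (by positivity) (by positivity)] at h
    have : β ^ 2 * (b - c) = 0 := by linear_combination h
    have h2 : β ^ 2 ≠ 0 := by positivity
    have := (mul_eq_zero.1 this).resolve_left h2
    linarith
  have hcv := lintegral_image_eq_lintegral_abs_deriv_mul measurableSet_Ioi hd hinj
    (fun b => ENNReal.ofReal (b ^ (a - 1) * Real.exp (-b * r)))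
  have hsub : (fun b : ℝ => β * b / (β + b)) '' Set.Ioi 0 ⊆ Set.Ioi 0 := by
    rintro _ ⟨b, hb, rfl⟩
    have hb : (0 : ℝ) < b := hb
    show (0 : ℝ) < β * b / (β + b)
    positivity
  refine le_trans (le_of_eq ?_) (lintegral_mono_set hsub)
  rw [hcv]
  refine setLIntegral_congr_fun measurableSet_Ioi fun b hb => ?_
  have hb : (0 : ℝ) < b := hb
  rw [← ENNReal.ofReal_mul (abs_nonneg _)]
  congr 1
  have hq : 0 < β / (β + b) := by positivity
  rw [abs_of_pos (by positivity), ← div_pow, show β * b / (β + b) = b * (β / (β + b)) by ring,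
    Real.mul_rpow hb.le hq.le, show a + 1 = (a - 1) + 2 by ring, Real.rpow_add hq,
    Real.rpow_two]
  ring

lemma aux_super (m : ℕ) (hm : 3 ≤ m) (β : ℝ) (hβ : 0 < β) (x : EuclideanSpace ℝ (Fin m))
    (hx : x ≠ 0) :
    ∫⁻ y : EuclideanSpace ℝ (Fin m), ENNReal.ofReal
      ((β / π) ^ ((m : ℝ) / 2) * Real.exp (-β * ‖x - y‖ ^ 2)
        * (1 / ‖y‖ ^ 2) ^ ((m : ℝ) / 2 - 1))
      ≤ ENNReal.ofReal ((1 / ‖x‖ ^ 2) ^ ((m : ℝ) / 2 - 1)) := by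
  have hm' : (3 : ℝ) ≤ m := by exact_mod_cast hm
  set a : ℝ := (m : ℝ) / 2 - 1 with ha
  have ha0 : 0 < a := by rw [ha]; linarith
  have hma : (m : ℝ) / 2 = a + 1 := by rw [ha]; ring
  have hG := Real.Gamma_pos_of_pos ha0
  have hxn : 0 < ‖x‖ ^ 2 := by have := norm_pos_iff.2 hx; positivity
  have hG' : ENNReal.ofReal (Real.Gamma a) ≠ 0 := by simpa using hG
  rw [← ENNReal.mul_le_mul_iff_left hG' ENNReal.ofReal_ne_top,
    ← ENNReal.ofReal_mul (by positivity), ← aux_gamma a _ ha0 hxn,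
    ← lintegral_mul_const' _ _ ENNReal.ofReal_ne_top]
  refine le_trans ?_ (aux_cov a β _ hβ)
  calc _ ≤ ∫⁻ y : EuclideanSpace ℝ (Fin m), ∫⁻ b in Set.Ioi (0 : ℝ),
        ENNReal.ofReal ((β / π) ^ ((m : ℝ) / 2) * Real.exp (-β * ‖x - y‖ ^ 2) *
          (b ^ (a - 1) * Real.exp (-b * ‖y‖ ^ 2))) := by
        refine lintegral_mono fun y => ?_
        have hc : 0 ≤ (β / π) ^ ((m : ℝ) / 2) * Real.exp (-β * ‖x - y‖ ^ 2) := by positivity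
        by_cases hy : y = 0
        · simp [hy, Real.zero_rpow ha0.ne']
        · have hyn : 0 < ‖y‖ ^ 2 := by have := norm_pos_iff.2 hy; positivity
          simp_rw [ENNReal.ofReal_mul hc]
          rw [lintegral_const_mul' _ _ ENNReal.ofReal_ne_top, aux_gamma a _ ha0 hyn,
            ENNReal.ofReal_mul (p := (1 / ‖y‖ ^ 2) ^ a) (by positivity), ← mul_assoc]
    _ = ∫⁻ b in Set.Ioi (0 : ℝ), ∫⁻ y : EuclideanSpace ℝ (Fin m),
        ENNReal.ofReal ((β / π) ^ ((m : ℝ) / 2) * Real.exp (-β * ‖x - y‖ ^ 2) *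
          (b ^ (a - 1) * Real.exp (-b * ‖y‖ ^ 2))) := by
        refine lintegral_lintegral_swap ?_
        refine Measurable.aemeasurable ?_
        unfold Function.uncurry
        fun_prop
    _ = _ := by
        refine setLIntegral_congr_fun measurableSet_Ioi fun b hb => ?_
        have hb : (0 : ℝ) < b := hb
        have e : ∀ y : EuclideanSpace ℝ (Fin m),
            (β / π) ^ ((m : ℝ) / 2) * Real.exp (-β * ‖x - y‖ ^ 2) *
              (b ^ (a - 1) * Real.exp (-b * ‖y‖ ^ 2))
            = ((β / π) ^ ((m : ℝ) / 2) * b ^ (a - 1)) *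
              (Real.exp (-β * ‖x - y‖ ^ 2) * Real.exp (-b * ‖y‖ ^ 2)) := fun y => by ring
        have hc : 0 ≤ (β / π) ^ ((m : ℝ) / 2) * b ^ (a - 1) := by positivity
        simp only [e, ENNReal.ofReal_mul hc]
        rw [lintegral_const_mul' _ _ ENNReal.ofReal_ne_top, aux_gauss m β b hβ hb,
          ← ENNReal.ofReal_mul hc, hma]
        congr 1
        rw [show β / (β + b) = (β / π) * (π / (β + b)) by field_simp,
          Real.mul_rpow (by positivity) (by positivity)]
        ring

theorem pointwise_multiplicative_subcommutation_heat (m : ℕ) (hm : 3 ≤ m)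
    (f : EuclideanSpace ℝ (Fin m) → ℝ)
    (hf : ContDiff ℝ (⊤ : ℕ∞) f) (hsupp : HasCompactSupport f) :
    ∀ t : ℝ, 0 < t → ∀ x : EuclideanSpace ℝ (Fin m),
      ‖x‖ ^ (m - 2) * (heatP m t f x) ^ 2
        ≤ heatP m t (fun y => ‖y‖ ^ (m - 2) * (f y) ^ 2) x := by
  intro t ht x
  have hfc : Continuous f := hf.continuous
  by_cases hx : x = 0
  · have : m - 2 ≠ 0 := by omega
    rw [hx, norm_zero, zero_pow this, zero_mul]
    unfold heatP
    exact mul_nonneg (by positivity) (integral_nonneg fun y => by positivity)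
  obtain ⟨β, hβ⟩ : ∃ β : ℝ, β = 1 / (4 * t) := ⟨_, rfl⟩
  have hβ0 : 0 < β := by rw [hβ]; positivity
  set C : ℝ := (β / π) ^ ((m : ℝ) / 2) with hC
  have hheat : ∀ g : EuclideanSpace ℝ (Fin m) → ℝ,
      heatP m t g x = ∫ y, (C * Real.exp (-β * ‖x - y‖ ^ 2)) * g y := by
    intro g
    unfold heatP
    rw [← integral_const_mul]
    congr 1
    ext y
    have h1 : (4 * π * t) ^ (-(m : ℝ) / 2) = C := by
      rw [neg_div, Real.rpow_neg (by positivity), ← Real.inv_rpow (by positivity), hC, hβ]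
      congr 1
      field_simp
    have h2 : -‖x - y‖ ^ 2 / (4 * t) = -β * ‖x - y‖ ^ 2 := by rw [hβ]; ring
    rw [h1, h2, mul_assoc]
  have hsup := aux_super m hm β hβ0 x hx
  have hw : ∀ y : EuclideanSpace ℝ (Fin m),
      (1 / ‖y‖ ^ 2) ^ ((m : ℝ) / 2 - 1) = (‖y‖ ^ (m - 2))⁻¹ := by
    intro y
    rw [one_div, ← inv_pow, ← Real.rpow_natCast, ← Real.rpow_mul (by positivity), ← inv_pow,
      ← Real.rpow_natCast _ (m - 2), Nat.cast_sub (by omega)]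
    congr 1
    push_cast
    ring
  simp_rw [hw] at hsup
  set k : EuclideanSpace ℝ (Fin m) → ℝ := fun y => C * Real.exp (-β * ‖x - y‖ ^ 2) with hk
  have hk0 : ∀ y, 0 ≤ k y := fun y => by simp only [hk, hC]; positivity
  have hkc : Continuous k := by simp only [hk]; fun_prop
  have hu : 0 < ‖x‖ ^ (m - 2) := by have := norm_pos_iff.2 hx; positivity
  have hmeas : Measurable (fun y => k y * (‖y‖ ^ (m - 2))⁻¹) := by
    have := hkc.measurable
    fun_prop
  have hnn : ∀ y, 0 ≤ k y * (‖y‖ ^ (m - 2))⁻¹ := fun y => mul_nonneg (hk0 y) (by positivity)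
  have hIw : Integrable (fun y => k y * (‖y‖ ^ (m - 2))⁻¹) := by
    refine ⟨hmeas.aestronglyMeasurable, ?_⟩
    rw [hasFiniteIntegral_iff_ofReal (Filter.Eventually.of_forall hnn)]
    exact lt_of_le_of_lt hsup ENNReal.ofReal_lt_top
  have hPw : ∫ y, k y * (‖y‖ ^ (m - 2))⁻¹ ≤ (‖x‖ ^ (m - 2))⁻¹ := by
    rw [← ENNReal.ofReal_le_ofReal_iff (by positivity),
      ofReal_integral_eq_lintegral_ofReal hIw (Filter.Eventually.of_forall hnn)]
    exact hsup
  have hIf : Integrable (fun y => k y * f y) :=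
    (hkc.mul hfc).integrable_of_hasCompactSupport hsupp.mul_left
  have hIg : Integrable (fun y => k y * (‖y‖ ^ (m - 2) * f y ^ 2)) := by
    refine Continuous.integrable_of_hasCompactSupport (by fun_prop) ?_
    have : (fun y => k y * (‖y‖ ^ (m - 2) * f y ^ 2))
        = (fun y => (k y * ‖y‖ ^ (m - 2) * f y) * f y) := by ext y; ring
    rw [this]
    exact hsupp.mul_left
  rw [hheat, hheat]
  change ‖x‖ ^ (m - 2) * (∫ y, k y * f y) ^ 2 ≤ ∫ y, k y * (‖y‖ ^ (m - 2) * f y ^ 2)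
  set F := ∫ y, k y * f y with hF
  set G := ∫ y, k y * (‖y‖ ^ (m - 2) * f y ^ 2) with hGdef
  set w := ∫ y, k y * (‖y‖ ^ (m - 2))⁻¹ with hwdef
  set u := ‖x‖ ^ (m - 2) with hudef
  have hae : ∀ᵐ y : EuclideanSpace ℝ (Fin m), y ≠ 0 := by
    have : Nonempty (Fin m) := ⟨⟨0, by omega⟩⟩
    exact Measure.ae_ne volume 0
  have hint : ∀ l : ℝ, 2 * l * F ≤ l ^ 2 * w + G := by
    intro l
    rw [hwdef, hGdef, hF]
    rw [← integral_const_mul, ← integral_const_mul,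
      ← integral_add (hIw.const_mul _) hIg]
    refine integral_mono_ae (hIf.const_mul _) ((hIw.const_mul _).add hIg) ?_
    filter_upwards [hae] with y hy
    have hv : 0 < ‖y‖ ^ (m - 2) := by have := norm_pos_iff.2 hy; positivity
    have : l ^ 2 * (k y * (‖y‖ ^ (m - 2))⁻¹) + k y * (‖y‖ ^ (m - 2) * f y ^ 2)
        - 2 * l * (k y * f y)
        = k y * ((‖y‖ ^ (m - 2))⁻¹ * (l - ‖y‖ ^ (m - 2) * f y) ^ 2) := by
      field_simp
      ring
    have h2 : 0 ≤ k y * ((‖y‖ ^ (m - 2))⁻¹ * (l - ‖y‖ ^ (m - 2) * f y) ^ 2) :=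
      mul_nonneg (hk0 y) (by positivity)
    linarith
  have hint := hint (u * F)
  have h3 : (u * F) ^ 2 * w ≤ (u * F) ^ 2 * u⁻¹ := mul_le_mul_of_nonneg_left hPw (sq_nonneg _)
  have h4 : (u * F) ^ 2 * u⁻¹ = u * F ^ 2 := by field_simp
  nlinarith
end

section
/- Let Ω ⊊ ℝ^m be a nonempty proper open convex set and let δ(x) = dist(x, ℝ^m \ Ω) denote the distance to the boundary. Then for every f ∈ C_c^∞(Ω) the boundary Hardy inequality ∫_Ω f(x)²/δ(x)² dx ≤ 4·∫_Ω |∇f(x)|² dx holds. -/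
open Real MeasureTheory

section hardy
set_option linter.unusedSectionVars false
variable {E : Type*} [NormedAddCommGroup E] [InnerProductSpace ℝ E]

lemma hardy_midconc (Ω : Set E) (hne : Ωᶜ.Nonempty) (hc : Convex ℝ Ω) (x v : E)
    (h1 : 0 < Metric.infDist (x + v) Ωᶜ) (h2 : 0 < Metric.infDist (x - v) Ωᶜ) :
    Metric.infDist (x + v) Ωᶜ + Metric.infDist (x - v) Ωᶜ ≤ 2 * Metric.infDist x Ωᶜ := by
  set a := Metric.infDist (x + v) Ωᶜ with ha
  set b := Metric.infDist (x - v) Ωᶜ with hb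
  have key : (a + b) / 2 ≤ Metric.infDist x Ωᶜ := by
    rw [Metric.le_infDist hne]
    intro y hy
    by_contra! hlt
    apply hy
    have hab : 0 < a + b := by positivity
    rw [dist_comm, dist_eq_norm] at hlt
    have mem : ∀ z : E, ∀ r : ℝ, 0 < r → r = Metric.infDist z Ωᶜ →
        z + (2 * r / (a + b)) • (y - x) ∈ Ω := by
      intro z r hr hrz
      by_contra hn
      have := Metric.infDist_le_dist_of_mem (x := z) (show _ ∈ Ωᶜ from hn)
      rw [← hrz, dist_self_add_right, norm_smul, Real.norm_of_nonneg (by positivity)] at this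
      have h3 : 2 * r / (a + b) * ‖y - x‖ < 2 * r / (a + b) * ((a + b) / 2) := by gcongr
      have h4 : 2 * r / (a + b) * ((a + b) / 2) = r := by field_simp
      linarith
    have m1 := mem _ a h1 ha
    have m2 := mem _ b h2 hb
    have := hc m1 m2 (show (0:ℝ) ≤ 1/2 by norm_num) (show (0:ℝ) ≤ 1/2 by norm_num) (by norm_num)
    convert this using 1
    have h5 : 2 * b / (a + b) = 2 - 2 * a / (a + b) := by field_simp; ring
    rw [h5]
    module
  linarith

lemma hardy_grad [ProperSpace E] (Ω : Set E) (ho : IsOpen Ω) (hne : Ωᶜ.Nonempty) (x : E)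
    (hx : 0 < Metric.infDist x Ωᶜ) (D : E →L[ℝ] ℝ)
    (hd : HasFDerivAt (fun x => Metric.infDist x Ωᶜ) D x) : 1 ≤ ‖D‖ := by
  obtain ⟨y, hy, hxy⟩ := ho.isClosed_compl.exists_infDist_eq_dist hne x
  set d := Metric.infDist x Ωᶜ with hdd
  have hn : ‖y - x‖ = d := by rw [hxy, dist_comm, dist_eq_norm]
  have h1 : ∀ t ∈ Set.Icc (0:ℝ) 1, Metric.infDist (x + t • (y - x)) Ωᶜ = (1 - t) * d := by
    intro t ht
    apply le_antisymm
    · refine (Metric.infDist_le_dist_of_mem hy).trans (le_of_eq ?_)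
      rw [dist_comm, dist_eq_norm, show y - (x + t • (y - x)) = (1 - t) • (y - x) by module,
        norm_smul, Real.norm_of_nonneg (by linarith [ht.2]), hn]
    · have := Metric.infDist_le_infDist_add_dist (s := Ωᶜ) (x := x) (y := x + t • (y - x))
      rw [dist_self_add_right, norm_smul, Real.norm_of_nonneg ht.1, hn] at this
      linarith
  have h2 : HasDerivAt (fun t : ℝ => Metric.infDist (x + t • (y - x)) Ωᶜ) (D (y - x)) 0 := by
    have hl : HasDerivAt (fun t : ℝ => x + t • (y - x)) (y - x) 0 := by
      simpa using ((hasDerivAt_id (0:ℝ)).smul_const (y - x)).const_add x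
    have hd' : HasFDerivAt (fun x => Metric.infDist x Ωᶜ) D (x + (0:ℝ) • (y - x)) := by simpa using hd
    exact hd'.comp_hasDerivAt (0:ℝ) hl
  have h3 : HasDerivWithinAt (fun t : ℝ => (1 - t) * d) (-d) (Set.Icc 0 1) 0 := by
    have : HasDerivAt (fun t : ℝ => (1 - t) * d) (-d) 0 := by
      simpa using ((hasDerivAt_id (0:ℝ)).const_sub 1).mul_const d
    exact this.hasDerivWithinAt
  have h4 := h2.hasDerivWithinAt (s := Set.Icc 0 1)
  have h5 := h3.congr_of_mem h1 (by simp)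
  have h6 : D (y - x) = -d :=
    (uniqueDiffOn_Icc (zero_lt_one' ℝ) 0 (by simp)).eq_deriv _ h4 h5
  have h7 := D.le_opNorm (y - x)
  rw [h6, norm_neg, Real.norm_of_nonneg hx.le, hn] at h7
  by_contra! h
  nlinarith

variable [FiniteDimensional ℝ E] [MeasurableSpace E] [BorelSpace E]

lemma hardy_ibp (μ : Measure E) [μ.IsAddHaarMeasure] (δ φ : E → ℝ) (hδ : Continuous δ)
    (hφ : Continuous φ) (hs : HasCompactSupport φ) (h0 : ∀ x, 0 ≤ φ x) (v : E)
    (hc : ∀ x ∈ tsupport φ, δ (x + v) + δ (x - v) ≤ 2 * δ x) :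
    0 ≤ ∫ x, (δ (x + v) - δ x) * (φ (x + v) - φ x) ∂μ := by
  have i1 : Integrable (fun x => (δ x - δ (x - v)) * φ x) μ :=
    Continuous.integrable_of_hasCompactSupport (by fun_prop) hs.mul_left
  have i2 : Integrable (fun x => (δ (x + v) - δ x) * φ x) μ :=
    Continuous.integrable_of_hasCompactSupport (by fun_prop) hs.mul_left
  have i3 : Integrable (fun x => (δ (x + v) - δ x) * φ (x + v)) μ := by
    simpa using i1.comp_add_right v
  have e1 : ∫ x, (δ (x + v) - δ x) * φ (x + v) ∂μ = ∫ x, (δ x - δ (x - v)) * φ x ∂μ := by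
    have := integral_add_right_eq_self (μ := μ) (fun x => (δ x - δ (x - v)) * φ x) v
    simpa using this
  simp_rw [mul_sub]
  rw [integral_sub i3 i2, e1, ← integral_sub i1 i2]
  apply integral_nonneg
  intro x
  by_cases hx : x ∈ tsupport φ
  · have := mul_nonneg (h0 x) (sub_nonneg.2 (hc x hx))
    simp only [Pi.zero_apply]
    nlinarith
  · simp [image_eq_zero_of_notMem_tsupport hx]

lemma hardy_lim (μ : Measure E) [μ.IsAddHaarMeasure] (δ φ : E → ℝ) (A B : NNReal)
    (hδ : LipschitzWith A δ)
    (hφ : LipschitzWith B φ) (hs : HasCompactSupport φ) (h0 : ∀ x, 0 ≤ φ x) (v : E) (hv : ‖v‖ ≤ 1)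
    (c : ℝ) (hcp : 0 < c)
    (hc : ∀ x ∈ tsupport φ, ∀ w : E, ‖w‖ < c → δ (x + w) + δ (x - w) ≤ 2 * δ x) :
    Integrable (fun x => fderiv ℝ δ x v * fderiv ℝ φ x v) μ ∧
    0 ≤ ∫ x, fderiv ℝ δ x v * fderiv ℝ φ x v ∂μ := by
  have hK : IsCompact (tsupport φ) := hs
  have hK1 : IsCompact (Metric.cthickening c (tsupport φ)) := hK.cthickening
  have bi : Integrable ((Metric.cthickening c (tsupport φ)).indicator (fun _ => (A * B : ℝ))) μ := by
    rw [integrable_indicator_iff hK1.measurableSet]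
    exact integrableOn_const hK1.measure_lt_top.ne
  constructor
  · refine bi.mono' ?_ (Filter.Eventually.of_forall fun x => ?_)
    · exact ((measurable_fderiv_apply_const ℝ δ v).mul
        (measurable_fderiv_apply_const ℝ φ v)).aestronglyMeasurable
    · by_cases hx : x ∈ tsupport φ
      · rw [Set.indicator_of_mem (Metric.self_subset_cthickening _ hx), norm_mul]
        have a1 := ((fderiv ℝ δ x).le_opNorm v).trans
          (mul_le_mul (norm_fderiv_le_of_lipschitz ℝ hδ) hv (norm_nonneg _) A.2)
        have a2 := ((fderiv ℝ φ x).le_opNorm v).trans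
          (mul_le_mul (norm_fderiv_le_of_lipschitz ℝ hφ) hv (norm_nonneg _) B.2)
        rw [mul_one] at a1 a2
        exact mul_le_mul a1 a2 (norm_nonneg _) A.2
      · have : fderiv ℝ φ x = 0 := by
          by_contra h
          exact hx (support_fderiv_subset ℝ h)
        rw [this]
        simp only [zero_apply, mul_zero, norm_zero]
        exact Set.indicator_nonneg (fun _ _ => by positivity) _
  · have T : Filter.Tendsto (fun h : ℝ => ∫ x, (h⁻¹ • (δ (x + h • v) - δ x)) *
        (h⁻¹ • (φ (x + h • v) - φ x)) ∂μ) (nhdsWithin 0 (Set.Ioi 0))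
        (nhds (∫ x, fderiv ℝ δ x v * fderiv ℝ φ x v ∂μ)) := by
      refine tendsto_integral_filter_of_dominated_convergence _ ?_ ?_ bi ?_
      · have := hδ.continuous
        have := hφ.continuous
        refine Filter.Eventually.of_forall fun h => Continuous.aestronglyMeasurable ?_
        fun_prop
      · filter_upwards [Ioo_mem_nhdsGT hcp] with h hh
        refine Filter.Eventually.of_forall fun x => ?_
        have hhv : ‖h • v‖ ≤ h := by
          rw [norm_smul, Real.norm_of_nonneg hh.1.le]
          nlinarith [hh.1]
        have lip : ∀ (C : NNReal) (g : E → ℝ), LipschitzWith C g →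
            ‖h⁻¹ • (g (x + h • v) - g x)‖ ≤ C := by
          intro C g hg
          have := hg.dist_le_mul (x + h • v) x
          rw [dist_eq_norm, dist_eq_norm, add_sub_cancel_left] at this
          rw [norm_smul, norm_inv, Real.norm_of_nonneg hh.1.le, inv_mul_le_iff₀ hh.1, mul_comm h]
          exact this.trans (mul_le_mul_of_nonneg_left hhv C.2)
        by_cases hx : x ∈ Metric.cthickening c (tsupport φ)
        · rw [Set.indicator_of_mem hx, norm_mul]
          exact mul_le_mul (lip A δ hδ) (lip B φ hφ) (norm_nonneg _) A.2
        · rw [Set.indicator_of_notMem hx]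
          have z1 : φ x = 0 := image_eq_zero_of_notMem_tsupport fun h' =>
            hx (Metric.self_subset_cthickening _ h')
          have z2 : φ (x + h • v) = 0 := image_eq_zero_of_notMem_tsupport fun h' =>
            hx (Metric.mem_cthickening_of_dist_le _ _ _ _ h'
              (by rw [dist_self_add_right]; exact hhv.trans hh.2.le))
          simp [z1, z2]
      · filter_upwards [hδ.ae_differentiableAt (μ := μ), hφ.ae_differentiableAt (μ := μ)] with x d1 d2
        have L : ∀ g : E → ℝ, DifferentiableAt ℝ g x →
            Filter.Tendsto (fun h : ℝ => h⁻¹ • (g (x + h • v) - g x)) (nhdsWithin 0 (Set.Ioi 0))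
              (nhds (fderiv ℝ g x v)) := by
          intro g hg
          have := (hg.hasFDerivAt.hasLineDerivAt v).tendsto_slope_zero_right
          simpa using this
        exact (L δ d1).mul (L φ d2)
    refine ge_of_tendsto T ?_
    filter_upwards [Ioo_mem_nhdsGT hcp] with h hh
    have hhv : ‖h • v‖ < c := by
      rw [norm_smul, Real.norm_of_nonneg hh.1.le]
      nlinarith [hh.1, hh.2]
    have := hardy_ibp μ δ φ hδ.continuous hφ.continuous hs h0 (h • v) (fun x hx => hc x hx _ hhv)
    have e : ∀ x, (h⁻¹ • (δ (x + h • v) - δ x)) * (h⁻¹ • (φ (x + h • v) - φ x)) =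
      (h⁻¹ * h⁻¹) * ((δ (x + h • v) - δ x) * (φ (x + h • v) - φ x)) := by
      intro x; simp only [smul_eq_mul]; ring
    simp_rw [e]
    rw [integral_const_mul]
    exact mul_nonneg (by have := hh.1; positivity) this

lemma hardy_quot_lip (F δ : E → ℝ) (A M : NNReal) (hF : LipschitzWith A F) (hM : ∀ x, |F x| ≤ M)
    (hδ : LipschitzWith 1 δ) (c : ℝ) (hc : 0 < c) :
    ∃ B, LipschitzWith B (fun x => F x / max (δ x) c) := by
  refine ⟨Real.toNNReal (A / c + M / c ^ 2), LipschitzWith.of_dist_le_mul fun x y => ?_⟩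
  rw [Real.coe_toNNReal _ (by positivity)]
  have hx : c ≤ max (δ x) c := le_max_right _ _
  have hy : c ≤ max (δ y) c := le_max_right _ _
  have h1 := (hδ.max_const c).dist_le_mul x y
  have h2 := hF.dist_le_mul x y
  have h3 := hM y
  rw [Real.dist_eq] at *
  set p := max (δ x) c
  set q := max (δ y) c
  have hp : 0 < p := hc.trans_le hx
  have hq : 0 < q := hc.trans_le hy
  have e : F x / p - F y / q = (F x - F y) / p + F y * (q - p) / (p * q) := by
    field_simp; ring
  rw [e]
  refine (abs_add_le _ _).trans ?_
  rw [add_mul]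
  rw [abs_div, abs_div, abs_mul, abs_of_pos hp, abs_of_pos (mul_pos hp hq), abs_sub_comm q p]
  simp only [NNReal.coe_one, one_mul] at h1
  have k1 : |F x - F y| / p ≤ (A * dist x y) / c := by gcongr
  have k2 : |F y| * |p - q| / (p * q) ≤ (M * dist x y) / (c * c) := by gcongr
  calc _ ≤ _ := add_le_add k1 k2
    _ = _ := by ring

end hardy

lemma hardy_sum_sq {m : ℕ} (L : EuclideanSpace ℝ (Fin m) →L[ℝ] ℝ) :
    ∑ i, (L (EuclideanSpace.basisFun (Fin m) ℝ i)) ^ 2 = ‖L‖ ^ 2 := by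
  set g := (InnerProductSpace.toDual ℝ (EuclideanSpace ℝ (Fin m))).symm L with hg
  have h1 : ‖g‖ = ‖L‖ := LinearIsometryEquiv.norm_map _ _
  rw [← h1, ← (EuclideanSpace.basisFun (Fin m) ℝ).sum_sq_norm_inner_left g]
  refine Finset.sum_congr rfl fun i _ => ?_
  rw [hg, InnerProductSpace.toDual_symm_apply, Real.norm_eq_abs, sq_abs]

theorem boundary_hardy_inequality_convex {m : ℕ}
    (Ω : Set (EuclideanSpace ℝ (Fin m))) (hΩopen : IsOpen Ω)
    (hΩne : Ω.Nonempty) (hΩproper : Ω ≠ Set.univ) (hΩconv : Convex ℝ Ω)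
    (f : EuclideanSpace ℝ (Fin m) → ℝ)
    (hf : ContDiff ℝ (⊤ : ℕ∞) f) (hsupp : HasCompactSupport f) (h0 : tsupport f ⊆ Ω) :
    ∫ x in Ω, (f x) ^ 2 / (Metric.infDist x Ωᶜ) ^ 2
      ≤ 4 * ∫ x in Ω, ‖gradient f x‖ ^ 2 := by
  have hne : Ωᶜ.Nonempty := Set.nonempty_compl.2 hΩproper
  have hgn : ∀ x, ‖gradient f x‖ = ‖fderiv ℝ f x‖ := fun x => by
    unfold gradient; exact LinearIsometryEquiv.norm_map _ _
  simp_rw [hgn]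
  have hfz : ∀ x, x ∉ tsupport f → f x = 0 := fun x hx => image_eq_zero_of_notMem_tsupport hx
  have hfdz : ∀ x, x ∉ tsupport f → fderiv ℝ f x = 0 := fun x hx => by
    by_contra h
    exact hx (support_fderiv_subset ℝ h)
  rw [setIntegral_eq_integral_of_forall_compl_eq_zero
      (fun x hx => by simp [hfz x fun h => hx (h0 h)]),
    setIntegral_eq_integral_of_forall_compl_eq_zero
      (fun x hx => by simp [hfdz x fun h => hx (h0 h)])]
  obtain ⟨c, hc, hcΩ⟩ := IsCompact.exists_cthickening_subset_open hsupp hΩopen h0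
  set δ : EuclideanSpace ℝ (Fin m) → ℝ := fun x => Metric.infDist x Ωᶜ with hδdef
  have hδl : LipschitzWith 1 δ := Metric.lipschitz_infDist_pt _
  have hδc : ∀ x ∈ tsupport f, c ≤ δ x := by
    intro x hx
    rw [hδdef, Metric.le_infDist hne]
    intro y hy
    by_contra! h
    exact hy (hcΩ (Metric.mem_cthickening_of_dist_le y x _ _ hx (by rw [dist_comm]; exact h.le)))
  have hmax : ∀ x, f x ^ 2 / max (δ x) c = f x ^ 2 / δ x := by
    intro x
    by_cases hx : x ∈ tsupport f
    · rw [max_eq_left (hδc x hx)]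
    · simp [hfz x hx]
  have hmax2 : ∀ x, f x ^ 2 / (max (δ x) c) ^ 2 = f x ^ 2 / δ x ^ 2 := by
    intro x
    by_cases hx : x ∈ tsupport f
    · rw [max_eq_left (hδc x hx)]
    · simp [hfz x hx]
  have hf2s : HasCompactSupport (fun x => f x ^ 2) :=
    hsupp.comp_left (g := fun t : ℝ => t ^ 2) (by simp)
  have hf2 : ContDiff ℝ (⊤ : ℕ∞) (fun x => f x ^ 2) := hf.pow 2
  obtain ⟨A, hA⟩ := hf2.lipschitzWith_of_hasCompactSupport hf2s (by simp)
  obtain ⟨M, hM⟩ := hf2s.exists_bound_of_continuous hf2.continuous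
  obtain ⟨B, hB⟩ := hardy_quot_lip (fun x => f x ^ 2) δ A M.toNNReal hA
    (fun x => (hM x).trans (Real.le_coe_toNNReal M)) hδl c hc
  simp only [hmax] at hB
  set φ : EuclideanSpace ℝ (Fin m) → ℝ := fun x => f x ^ 2 / δ x with hφdef
  have hsub : tsupport φ ⊆ tsupport f := by
    refine closure_mono fun x hx => ?_
    intro h
    exact hx (by simp [hφdef, h])
  have hφs : HasCompactSupport φ := hsupp.of_isClosed_subset (isClosed_tsupport _) hsub
  have hδpos : ∀ x ∈ Ω, 0 < δ x := fun x hx =>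
    (hΩopen.isClosed_compl.notMem_iff_infDist_pos hne).1 (by simpa using hx)
  have key := fun i : Fin m => hardy_lim volume δ φ 1 B hδl hB hφs
    (fun x => div_nonneg (sq_nonneg _) Metric.infDist_nonneg)
    (EuclideanSpace.basisFun (Fin m) ℝ i) (by simp) c hc (by
      intro x hx w hw
      have hx' := hsub hx
      apply hardy_midconc Ω hne hΩconv x w
      · exact hδpos _ (hcΩ (Metric.mem_cthickening_of_dist_le _ x _ _ hx' (by simpa using hw.le)))
      · exact hδpos _ (hcΩ (Metric.mem_cthickening_of_dist_le _ x _ _ hx'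
          (by simpa [dist_eq_norm] using hw.le))))
  have hsum : 0 ≤ ∫ x, ∑ i : Fin m, fderiv ℝ δ x (EuclideanSpace.basisFun (Fin m) ℝ i) *
      fderiv ℝ φ x (EuclideanSpace.basisFun (Fin m) ℝ i) := by
    rw [integral_finsetSum _ fun i _ => (key i).1]
    exact Finset.sum_nonneg fun i _ => (key i).2
  have hI1 : Integrable (fun x => f x ^ 2 / δ x ^ 2) := by
    simp_rw [← hmax2]
    refine Continuous.integrable_of_hasCompactSupport ?_ ?_
    · refine hf2.continuous.div ((hδl.continuous.max continuous_const).pow 2) fun x => ?_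
      have : 0 < max (δ x) c := lt_max_of_lt_right hc
      positivity
    · simp_rw [div_eq_mul_inv]
      exact hf2s.mul_right
  have hI2 : Integrable (fun x => ‖fderiv ℝ f x‖ ^ 2) := by
    refine Continuous.integrable_of_hasCompactSupport ?_ ?_
    · exact ((hf.continuous_fderiv (by simp)).norm).pow 2
    · exact (hsupp.fderiv ℝ).comp_left (g := fun t => ‖t‖ ^ 2) (by simp)
  have hle : ∫ x, ∑ i : Fin m, fderiv ℝ δ x (EuclideanSpace.basisFun (Fin m) ℝ i) *
      fderiv ℝ φ x (EuclideanSpace.basisFun (Fin m) ℝ i) ≤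
      ∫ x, (2 * ‖fderiv ℝ f x‖ ^ 2 - 1 / 2 * (f x ^ 2 / δ x ^ 2)) := by
    refine integral_mono_ae (integrable_finsetSum _ fun i _ => (key i).1)
      ((hI2.const_mul 2).sub (hI1.const_mul (1 / 2))) ?_
    filter_upwards [hδl.ae_differentiableAt (μ := volume)] with x hd
    by_cases hx : x ∈ tsupport f
    · have hp : 0 < δ x := hδpos x (h0 hx)
      have hDf := (hf.differentiable (by simp) x).hasFDerivAt
      have hD := hd.hasFDerivAt
      have hg := hardy_grad Ω hΩopen hne x hp _ hD
      have hφ' : ∀ v, fderiv ℝ φ x v =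
          2 * f x * fderiv ℝ f x v / δ x - f x ^ 2 * fderiv ℝ δ x v / δ x ^ 2 := by
        intro v
        have hinv := (hasDerivAt_inv hp.ne').comp_hasFDerivAt x hD
        have hq := (hDf.pow 2).mul hinv
        have hq' : fderiv ℝ φ x = _ := HasFDerivAt.fderiv hq
        rw [hq']
        simp
        field_simp
        ring
      have hterm : ∀ i : Fin m, fderiv ℝ δ x (EuclideanSpace.basisFun (Fin m) ℝ i) *
          fderiv ℝ φ x (EuclideanSpace.basisFun (Fin m) ℝ i) ≤
          2 * (fderiv ℝ f x (EuclideanSpace.basisFun (Fin m) ℝ i)) ^ 2 -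
          1 / 2 * (f x ^ 2 / δ x ^ 2) *
            (fderiv ℝ δ x (EuclideanSpace.basisFun (Fin m) ℝ i)) ^ 2 := by
        intro i
        rw [hφ']
        generalize fderiv ℝ f x (EuclideanSpace.basisFun (Fin m) ℝ i) = a
        generalize fderiv ℝ δ x (EuclideanSpace.basisFun (Fin m) ℝ i) = b
        have := sq_nonneg (2 * a - f x * b / δ x)
        have e : (2 * a ^ 2 - 1 / 2 * (f x ^ 2 / δ x ^ 2) * b ^ 2) -
          b * (2 * f x * a / δ x - f x ^ 2 * b / δ x ^ 2) =
          1 / 2 * (2 * a - f x * b / δ x) ^ 2 := by field_simp; ring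
        linarith
      refine (Finset.sum_le_sum fun i _ => hterm i).trans ?_
      rw [Finset.sum_sub_distrib, ← Finset.mul_sum, ← Finset.mul_sum, hardy_sum_sq, hardy_sum_sq]
      have h1 : (1:ℝ) ≤ ‖fderiv ℝ δ x‖ ^ 2 := by nlinarith
      have h2 : 0 ≤ f x ^ 2 / δ x ^ 2 := by positivity
      nlinarith
    · have : fderiv ℝ φ x = 0 := by
        by_contra h
        exact hx (hsub (support_fderiv_subset ℝ h))
      simp [this, hfz x hx]
  rw [integral_sub (hI2.const_mul 2) (hI1.const_mul (1 / 2)), integral_const_mul,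
    integral_const_mul] at hle
  linarith
end
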